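/- An n-multilinear local differential operator A : [(Ω_*)^{⊗n}]_0 → Ω_0 can be lifted to a sequence of n-multilinear local differential operators f_s : [(Ω_*)^{⊗n}]_s → Ω_s with f_0 = A and d_H f_s = f_{s−1} d_H^{⊗n} (i.e. f = {f_s} is a 0-cycle in DEnd_*(n)) if and only if χ(A ∘ d/dx^i_j) = 0 for all 1 ≤ i ≤ N and 1 ≤ j ≤ n. Moreover, if χ(A) = 0, the lift can be chosen with f_s = 0 for all s ≥ 2. -/

import Mathlib

/-!
Everything takes place in the algebra `Loc N` of local functions, on which the total derivatives
`Dt i` are commuting derivations, and in the space `Vs 0` of local differential operators inside the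
space `W N n` of all maps `Loc(E)^n → Loc(E)`.

*Characteristic and total derivatives.* Integration by parts (`ibp`) writes every operator as
`A = Σ_l d/dx^l ∘ b_l + χ(A)`, so `χ(A) = 0` makes `A` a sum of total derivatives. For the converse
let `YO i` be the commutator with multiplication of the first argument by `x^i`. It kills operators
in which no `d/dy_1^i` occurs, such as `χ(A)`, and satisfies `[YO i, d/dx^i ∘] = 1`: it is the
formal derivative with respect to `d/dy_1^i`. Hence division with remainder by `d/dx^i` is possible
(`div_exists`) and unique (`div_unique`), and a sum of total derivatives killed by all the `YO i`
vanishes (`sum_XO_eq_zero`). Thus `χ(A) = 0` if and only if `A = Σ_l d/dx^l ∘ b_l` for some local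
differential operators `b_l` (`chiZero_iff`). In particular the vanishing of `χ` does not depend on
the chosen polarized coefficients.

*Acyclicity.* Applied to one variable at a time, the same division shows that the Koszul complex of
operator-valued horizontal forms, with differential `dK` given by postcomposition with the total
derivatives, is exact below the top form degree (`koszul_acyclic`); in top degree a form is exact as
soon as its coefficient is a sum of total derivatives (`koszul_top`).

*Lifting.* If `f` is a cycle with `f_0 = A`, the component `d_H f_1 = f_0 d_H` of the cycle equation
displays each `A ∘ d/dx^i_j` as a sum of total derivatives (`ZO_of_cycle`). Conversely, if each of
them is such a sum then `f_0 d_H` is exact, which gives `f_1`; and once `f_s` is known,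
`d_H (f_s d_H) = f_{s-1} d_H d_H = 0`, so that acyclicity gives `f_{s+1}` (`lift_exists`).
If `A` itself is a sum of total derivatives, write `A = d_H B`; the boundary of the degree `1`
element `B` is a lift whose only components are `f_0 = d_H B` and `f_1 = B d_H` (`lift_short`).
-/

open scoped BigOperators

namespace JetBundle

/-- Multi-indices `J = (j_1,…,j_N)`. -/
abbrev MI (N : ℕ) := Fin N → ℕ

/-- A point of the infinite jet bundle `J^∞E`, with coordinates `(x^i, u_J)`. -/
abbrev JetPt (N : ℕ) := (Fin N → ℝ) × (MI N → ℝ)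

/-- Real-valued functions on the infinite jet bundle. -/
abbrev Fn (N : ℕ) := JetPt N → ℝ

/-- Partial derivative with respect to the base coordinate `x^i`. -/
noncomputable def pderivX {N : ℕ} (i : Fin N) (f : Fn N) : Fn N :=
  fun p => deriv (fun t => f (Function.update p.1 i t, p.2)) (p.1 i)

/-- Partial derivative with respect to the jet coordinate `u_J`. -/
noncomputable def pderivU {N : ℕ} (J : MI N) (f : Fn N) : Fn N :=
  fun p => deriv (fun t => f (p.1, Function.update p.2 J t)) (p.2 J)

/-- `iJ` : the multi-index `J` with its `i`-th entry increased by `1`. -/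
def inc {N : ℕ} (i : Fin N) (J : MI N) : MI N := Function.update J i (J i + 1)

/-- The total derivative `d/dx^i = ∂/∂x^i + Σ_J u_{iJ} ∂/∂u_J`. -/
noncomputable def Dtot {N : ℕ} (i : Fin N) (f : Fn N) : Fn N :=
  fun p => pderivX i f p + ∑' J : MI N, p.2 (inc i J) * pderivU J f p

/-- Iterated total derivative `(d/dx)^I`. -/
noncomputable def DPow {N : ℕ} (I : MI N) : Fn N → Fn N :=
  (List.finRange N).foldr (fun i g => (Dtot i)^[I i] ∘ g) id

/-- Iterated vertical derivative `(∂/∂u)^α` for a finitely supported exponent `α`. -/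
noncomputable def UPow {N : ℕ} (α : MI N →₀ ℕ) : Fn N → Fn N :=
  α.support.toList.foldr (fun J g => (pderivU J)^[α J] ∘ g) id

/-- A local function: a smooth function of the base coordinates and
finitely many jet coordinates `u_J`. -/
def IsLocal {N : ℕ} (f : Fn N) : Prop :=
  ∃ (S : Finset (MI N)) (g : ((Fin N → ℝ) × (↥S → ℝ)) → ℝ),
    ContDiff ℝ (⊤ : ℕ∞) g ∧ ∀ p : JetPt N, f p = g (p.1, fun J => p.2 J.1)

/-- The formal differential degree of an exponent `α`: the maximal `|J|` with `α J ≠ 0`. -/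
def degf {N : ℕ} (α : MI N →₀ ℕ) : ℕ := α.support.sup fun J => ∑ i, J i

/-- Index type for the coefficients of an `n`-multilinear local differential operator:
a tuple of multi-indices `(I_1,…,I_n)` and vertical exponents `(α_1,…,α_n)`. -/
abbrev Idx (N n : ℕ) := (Fin n → MI N) × (Fin n → (MI N →₀ ℕ))

/-- Coefficient data of an `n`-multilinear local differential operator. -/
abbrev OpData (N n : ℕ) := Idx N n → Fn N

/-- `n`-multilinear operators on functions on the jet bundle. -/
abbrev Op (N n : ℕ) := (Fin n → Fn N) → Fn N

/-- An `n`-tuple of local functions. -/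
def LocalTuple {N n : ℕ} (f : Fin n → Fn N) : Prop := ∀ j, IsLocal (f j)

/-- Coefficient data is admissible if all coefficients are local functions and, for each `m`,
only finitely many coefficients with `Σ_j deg_f(α_j) ≤ m` are nonzero. -/
def Good {N n : ℕ} (q : OpData N n) : Prop :=
  (∀ Iα, IsLocal (q Iα)) ∧
    ∀ m : ℕ, {Iα : Idx N n | q Iα ≠ 0 ∧ ∑ j, degf (Iα.2 j) ≤ m}.Finite

/-- The (unpolarized) realization of coefficient data:
`A(f_1,…,f_n) = Σ p_{I,α} Π_j (d/dx)^{I_j} (∂/∂u)^{α_j} f_j`. -/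
noncomputable def realizeU {N n : ℕ} (q : OpData N n) (f : Fin n → Fn N) : Fn N :=
  fun pt => ∑' Iα : Idx N n, q Iα pt * ∏ j, DPow (Iα.1 j) (UPow (Iα.2 j) (f j)) pt

/-- The polarized realization of coefficient data: the slot `I_1` records powers of
`d/dy_1 = Σ_j d/dx_j`, i.e. total derivatives applied to the whole product, while for `j ≥ 2`
the slot `I_j` records powers of `d/dy_j = d/dx_j` acting on the `j`-th argument:
`A(f_1,…,f_n) = Σ q_{I;α} (d/dx)^{I_1} [ (∂/∂u)^{α_1}f_1 · Π_{j≥2} (d/dx)^{I_j}(∂/∂u)^{α_j} f_j ]`. -/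
noncomputable def realizeP {N n : ℕ} [NeZero n] (q : OpData N n) (f : Fin n → Fn N) : Fn N :=
  fun pt => ∑' Iα : Idx N n, q Iα pt *
    DPow (Iα.1 0) (fun p => ∏ j,
      if j = (0 : Fin n) then UPow (Iα.2 j) (f j) p
      else DPow (Iα.1 j) (UPow (Iα.2 j) (f j)) p) pt

/-- The characteristic, on polarized coefficient data:
`χ(q)_{(0,I_2,…,I_n);α} := Σ_{I_1} (−1)^{|I_1|} (d/dx)^{I_1} q_{I_1,I_2,…,I_n;α}`. -/
noncomputable def chiData {N n : ℕ} [NeZero n] (q : OpData N n) : OpData N n :=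
  fun Iα =>
    if Iα.1 0 = 0 then
      fun pt => ∑' K : MI N,
        (-1 : ℝ) ^ (∑ i, K i) * DPow K (q (Function.update Iα.1 0 K, Iα.2)) pt
    else 0

/-- `q` is a polarized presentation of the operator `A` (on local functions). -/
def Presents {N n : ℕ} [NeZero n] (q : OpData N n) (A : Op N n) : Prop :=
  ∀ f, LocalTuple f → ∀ pt, A f pt = realizeP q f pt

/-- `A` is an `n`-multilinear local differential operator (unpolarized form). -/
def IsLDO {N n : ℕ} (A : Op N n) : Prop :=
  ∃ q : OpData N n, Good q ∧ ∀ f, LocalTuple f → ∀ pt, A f pt = realizeU q f pt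

/-- `A` is an `n`-multilinear local differential operator, given by a polarized presentation. -/
def IsPLDO {N n : ℕ} [NeZero n] (A : Op N n) : Prop :=
  ∃ q : OpData N n, Good q ∧ Presents q A

/-- `A` is an `n`-multilinear local differential operator with vanishing characteristic. -/
def ChiZero {N n : ℕ} [NeZero n] (A : Op N n) : Prop :=
  ∃ q : OpData N n, Good q ∧ Presents q A ∧
    ∀ f, LocalTuple f → ∀ pt, realizeP (chiData q) f pt = 0

/-- Precomposition `A ∘ d/dx^i_j` with the total derivative acting on the `j`-th argument. -/
noncomputable def precompD {N n : ℕ} (A : Op N n) (i : Fin N) (j : Fin n) : Op N n :=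
  fun f => A (Function.update f j (Dtot i (f j)))

/-- A horizontal form, recorded by its coefficients on the basis
`(dx)^ε = (dx^1)^{ε^1} ∧ ⋯ ∧ (dx^N)^{ε^N}`, `ε : Fin N → Bool`. -/
abbrev Form (N : ℕ) := (Fin N → Bool) → Fn N

/-- The form-degree `|ε|`. -/
def wt {N : ℕ} (ε : Fin N → Bool) : ℕ := ∑ i, if ε i then 1 else 0

/-- The sign exponent: the number of entries of `ε` below `i` which are set. -/
def pos {N : ℕ} (i : Fin N) (ε : Fin N → Bool) : ℕ := ∑ l, if l < i ∧ ε l then 1 else 0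

/-- The horizontal differential `d_H ω = Σ_i dx^i ∧ (d/dx^i) ω`. -/
noncomputable def dH {N : ℕ} (ω : Form N) : Form N :=
  fun δ pt => ∑ i : Fin N,
    if δ i then (-1 : ℝ) ^ pos i δ * Dtot i (ω (Function.update δ i false)) pt else 0

/-- A matrix of operators acting on horizontal forms (linear case). -/
abbrev FormOp (N : ℕ) := (Fin N → Bool) → (Fin N → Bool) → (Fn N → Fn N)

/-- Application of a matrix of operators to a form. -/
noncomputable def applyFO {N : ℕ} (M : FormOp N) (ω : Form N) : Form N :=
  fun δ pt => ∑ ε : Fin N → Bool, M ε δ (ω ε) pt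

/-- A degree element of `DEnd(n)`: a matrix indexed by basis multidegrees of the inputs
`(ε_1,…,ε_n)` and of the output `δ`, with `n`-multilinear operator entries. -/
abbrev DMat (N n : ℕ) := (Fin n → (Fin N → Bool)) → (Fin N → Bool) → Op N n

/-- All matrix entries are local differential operators. -/
def LDOMat {N n : ℕ} [NeZero n] (F : DMat N n) : Prop := ∀ εs δ, IsPLDO (F εs δ)

/-- `F` represents a degree-`k` map of the regraded horizontal complexes
(`Ω_i := Ω^{N−i,0}`): the entry at `(ε⃗, δ)` vanishes unless
`N − wt δ = k + Σ_j (N − wt ε_j)`. -/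
def GradedMat {N n : ℕ} (k : ℤ) (F : DMat N n) : Prop :=
  ∀ εs δ, F εs δ ≠ 0 → (wt δ : ℤ) = (N : ℤ) - k - ∑ j, ((N : ℤ) - (wt (εs j) : ℤ))

/-- The differential `(δf)_s = d_H f_s − (−1)^k f_{s−1} d_H^{⊗n}` of the complex `DEnd_*(n)`,
written out on matrix entries. -/
noncomputable def deltaMat {N n : ℕ} (k : ℤ) (F : DMat N n) : DMat N n :=
  fun εs δ g =>
    (fun pt => ∑ i : Fin N,
      if δ i then (-1 : ℝ) ^ pos i δ * Dtot i (F εs (Function.update δ i false) g) pt else 0)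
    -
    ((-1 : ℝ) ^ k) • (fun pt => ∑ j : Fin n, ∑ i : Fin N,
      if εs j i = false then
        (-1 : ℝ) ^ ((∑ l ∈ Finset.univ.filter fun l => l < j, wt (εs l)) + pos i (εs j)) *
          F (Function.update εs j (Function.update (εs j) i true)) δ
            (Function.update g j (Dtot i (g j))) pt
      else 0)

/-- A matrix of operators vanishes (on local arguments). -/
def MatZeroLoc {N n : ℕ} (F : DMat N n) : Prop :=
  ∀ εs δ g, LocalTuple g → ∀ pt, F εs δ g pt = 0

/-- Two matrices of operators agree (on local arguments). -/
def MatEqLoc {N n : ℕ} (F G : DMat N n) : Prop :=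
  ∀ εs δ g, LocalTuple g → ∀ pt, F εs δ g pt = G εs δ g pt

/-- The projection `B_0 : DEnd_0(n) → LDO(n)`, i.e. the component `f_0` on the identifications
`[(Ω_*)^{⊗n}]_0 ≅ Loc(E)^{⊗n}`, `Ω_0 ≅ Loc(E)`. -/
def B0 {N n : ℕ} (F : DMat N n) : Op N n := F (fun _ _ => true) fun _ => true

/-- A form with coefficients in `LDO(n)`: an element of the operator complex `O^*(n)`. -/
abbrev OForm (N n : ℕ) := (Fin N → Bool) → Op N n

/-- The differential of the operator complex: `d(A (dx)^ε) = Σ_i (d/dx^i ∘ A) dx^i ∧ (dx)^ε`. -/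
noncomputable def dO {N n : ℕ} (ω : OForm N n) : OForm N n :=
  fun δ g pt => ∑ i : Fin N,
    if δ i then (-1 : ℝ) ^ pos i δ * Dtot i (ω (Function.update δ i false) g) pt else 0

/-- An element of `O^*(n)` concentrated in degree `k`. -/
def OGraded {N n : ℕ} (k : ℕ) (ω : OForm N n) : Prop := ∀ δ, ω δ ≠ 0 → wt δ = k

/-- All coefficients are local differential operators. -/
def OLDO {N n : ℕ} [NeZero n] (ω : OForm N n) : Prop := ∀ δ, IsPLDO (ω δ)

/-- An element of `O^*(n)` vanishes on local arguments. -/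
def OZeroLoc {N n : ℕ} (ω : OForm N n) : Prop :=
  ∀ δ g, LocalTuple g → ∀ pt, ω δ g pt = 0

/-- Two elements of `O^*(n)` agree on local arguments. -/
def OEqLoc {N n : ℕ} (ω η : OForm N n) : Prop :=
  ∀ δ g, LocalTuple g → ∀ pt, ω δ g pt = η δ g pt

/-- The Euler operator `E(L dx^1∧⋯∧dx^N) = Σ_I (−1)^{|I|} (d/dx)^I (∂L/∂u_I)`. -/
noncomputable def Euler {N : ℕ} (L : Fn N) : Fn N :=
  fun pt => ∑' I : MI N, (-1 : ℝ) ^ (∑ i, I i) * DPow I (pderivU I L) pt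

end JetBundle
namespace JetBundle

section

/-! ### The algebra of local functions and its partial derivatives -/

/-- Derivative of a function on the jet bundle along the constant direction `v`. -/
noncomputable def dirD {N : ℕ} (v : JetPt N) (f : Fn N) : Fn N :=
  fun p => deriv (fun t : ℝ => f (p + t • v)) 0

/-- The direction of the base coordinate `x^i`. -/
def vX {N : ℕ} (i : Fin N) : JetPt N := (Pi.single i 1, 0)

/-- The direction of the jet coordinate `u_J`. -/
def vU {N : ℕ} (J : MI N) : JetPt N := (0, Pi.single J 1)

theorem pderivX_eq {N : ℕ} (i : Fin N) (f : Fn N) : pderivX i f = dirD (vX i) f := by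
  funext p
  unfold pderivX dirD
  have : (fun t : ℝ => f (p + t • vX i)) =
      fun t => (fun s => f (Function.update p.1 i s, p.2)) (t + p.1 i) := by
    funext t
    congr 1
    refine Prod.ext ?_ ?_
    · funext l
      by_cases h : l = i
      · subst h; simp [vX, add_comm]
      · simp [vX, h]
    · simp [vX]
  rw [this, deriv_comp_add_const (fun s => f (Function.update p.1 i s, p.2)) (p.1 i) 0]
  simp

theorem pderivU_eq {N : ℕ} (J : MI N) (f : Fn N) : pderivU J f = dirD (vU J) f := by
  funext p
  unfold pderivU dirD
  have : (fun t : ℝ => f (p + t • vU J)) =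
      fun t => (fun s => f (p.1, Function.update p.2 J s)) (t + p.2 J) := by
    funext t
    congr 1
    refine Prod.ext ?_ ?_
    · simp [vU]
    · funext l
      by_cases h : l = J
      · subst h; simp [vU, add_comm]
      · simp [vU, h]
  rw [this, deriv_comp_add_const (fun s => f (p.1, Function.update p.2 J s)) (p.2 J) 0]
  simp

/-- The projection of the jet bundle to the coordinates `x^i` and `u_J`, `J ∈ S`. -/
def prS {N : ℕ} (S : Finset (MI N)) : JetPt N →ₗ[ℝ] ((Fin N → ℝ) × (↥S → ℝ)) where
  toFun p := (p.1, fun J => p.2 J.1)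
  map_add' _ _ := rfl
  map_smul' _ _ := rfl

theorem isLocal_iff {N : ℕ} (f : Fn N) : IsLocal f ↔
    ∃ (S : Finset (MI N)) (g : ((Fin N → ℝ) × (↥S → ℝ)) → ℝ),
      ContDiff ℝ (⊤ : ℕ∞) g ∧ f = fun p => g (prS S p) := by
  unfold IsLocal
  simp only [funext_iff]
  rfl

theorem isLocal_mono {N : ℕ} {S T : Finset (MI N)} (hST : S ⊆ T)
    {g : ((Fin N → ℝ) × (↥S → ℝ)) → ℝ} (hg : ContDiff ℝ (⊤ : ℕ∞) g) :
    ∃ g' : ((Fin N → ℝ) × (↥T → ℝ)) → ℝ, ContDiff ℝ (⊤ : ℕ∞) g' ∧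
      (fun p => g (prS S p)) = fun p => g' (prS T p) := by
  refine ⟨fun w => g (w.1, fun J => w.2 ⟨J.1, hST J.2⟩), ?_, rfl⟩
  fun_prop

theorem hasDerivAt_line {N : ℕ} {S : Finset (MI N)}
    {g : ((Fin N → ℝ) × (↥S → ℝ)) → ℝ} (hg : ContDiff ℝ (⊤ : ℕ∞) g) (v p : JetPt N) :
    HasDerivAt (fun t : ℝ => g (prS S (p + t • v))) (fderiv ℝ g (prS S p) (prS S v)) 0 := by
  have h1 : HasFDerivAt g (fderiv ℝ g (prS S p)) (prS S p + (0 : ℝ) • prS S v) := by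
    have := (hg.differentiable (by simp)) (prS S p)
    simpa using this.hasFDerivAt
  have h2 : HasDerivAt (fun t : ℝ => prS S p + t • prS S v) (prS S v) 0 := by
    simpa using ((hasDerivAt_id (0 : ℝ)).smul_const (prS S v)).const_add (prS S p)
  have := h1.comp_hasDerivAt (0 : ℝ) h2
  simpa [Function.comp_def, map_add, map_smul] using this

theorem dirD_eq {N : ℕ} {S : Finset (MI N)}
    {g : ((Fin N → ℝ) × (↥S → ℝ)) → ℝ} (hg : ContDiff ℝ (⊤ : ℕ∞) g) (v : JetPt N) :
    dirD v (fun p => g (prS S p)) = fun p => fderiv ℝ g (prS S p) (prS S v) := by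
  funext p
  exact (hasDerivAt_line hg v p).deriv

theorem contDiff_fderiv_apply {N : ℕ} {S : Finset (MI N)}
    {g : ((Fin N → ℝ) × (↥S → ℝ)) → ℝ} (hg : ContDiff ℝ (⊤ : ℕ∞) g)
    (w : (Fin N → ℝ) × (↥S → ℝ)) : ContDiff ℝ (⊤ : ℕ∞) (fun q => fderiv ℝ g q w) := by
  have : ContDiff ℝ (⊤ : ℕ∞) (fderiv ℝ g) := hg.fderiv_right (by simp)
  exact this.clm_apply contDiff_const

theorem IsLocal.dirD {N : ℕ} {f : Fn N} (hf : IsLocal f) (v : JetPt N) :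
    IsLocal (JetBundle.dirD v f) := by
  obtain ⟨S, g, hg, rfl⟩ := (isLocal_iff f).1 hf
  rw [dirD_eq hg]
  exact (isLocal_iff _).2 ⟨S, _, contDiff_fderiv_apply hg _, rfl⟩

theorem IsLocal.differentiable_line {N : ℕ} {f : Fn N} (hf : IsLocal f) (v p : JetPt N) :
    DifferentiableAt ℝ (fun t : ℝ => f (p + t • v)) 0 := by
  obtain ⟨S, g, hg, rfl⟩ := (isLocal_iff f).1 hf
  exact (hasDerivAt_line hg v p).differentiableAt

/-- Derivatives along constant directions commute: symmetry of the second derivative of the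
finite-dimensional representative. -/
theorem dirD_comm {N : ℕ} {f : Fn N} (hf : IsLocal f) (v w : JetPt N) :
    dirD v (dirD w f) = dirD w (dirD v f) := by
  obtain ⟨S, g, hg, rfl⟩ := (isLocal_iff f).1 hf
  have h2 : ContDiff ℝ (⊤ : ℕ∞) (fderiv ℝ g) := hg.fderiv_right (by simp)
  rw [dirD_eq hg, dirD_eq hg, dirD_eq (contDiff_fderiv_apply hg _),
    dirD_eq (contDiff_fderiv_apply hg _)]
  funext p
  have hd : DifferentiableAt ℝ (fderiv ℝ g) (prS S p) := h2.differentiable (by simp) _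
  rw [fderiv_clm_apply hd (differentiableAt_const _),
    fderiv_clm_apply hd (differentiableAt_const _)]
  have hs : IsSymmSndFDerivAt ℝ g (prS S p) :=
    hg.contDiffAt.isSymmSndFDerivAt (by
      rw [minSmoothness_of_isRCLikeNormedField]; exact WithTop.coe_le_coe.2 (le_top : (2 : ℕ∞) ≤ ⊤))
  simpa using hs (prS S v) (prS S w)

/-- The algebra `Loc(E)` of local functions. -/
def Loc (N : ℕ) : Subalgebra ℝ (Fn N) where
  carrier := {f | IsLocal f}
  mul_mem' {a b} ha hb := by
    obtain ⟨S, g, hg, rfl⟩ := (isLocal_iff a).1 ha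
    obtain ⟨T, g', hg', rfl⟩ := (isLocal_iff b).1 hb
    classical
    obtain ⟨k, hk, e⟩ := isLocal_mono (Finset.subset_union_left : S ⊆ S ∪ T) hg
    obtain ⟨k', hk', e'⟩ := isLocal_mono (Finset.subset_union_right : T ⊆ S ∪ T) hg'
    rw [e, e']
    exact (isLocal_iff _).2 ⟨S ∪ T, fun w => k w * k' w, hk.mul hk', rfl⟩
  add_mem' {a b} ha hb := by
    obtain ⟨S, g, hg, rfl⟩ := (isLocal_iff a).1 ha
    obtain ⟨T, g', hg', rfl⟩ := (isLocal_iff b).1 hb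
    classical
    obtain ⟨k, hk, e⟩ := isLocal_mono (Finset.subset_union_left : S ⊆ S ∪ T) hg
    obtain ⟨k', hk', e'⟩ := isLocal_mono (Finset.subset_union_right : T ⊆ S ∪ T) hg'
    rw [e, e']
    exact (isLocal_iff _).2 ⟨S ∪ T, fun w => k w + k' w, hk.add hk', rfl⟩
  algebraMap_mem' r := ⟨∅, fun _ => r, contDiff_const, fun _ => rfl⟩

theorem mem_Loc {N : ℕ} {f : Fn N} : f ∈ Loc N ↔ IsLocal f := Iff.rfl

/-- The derivation `∂_v` of `Loc(E)` along a constant direction `v`. -/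
noncomputable def dv {N : ℕ} (v : JetPt N) : Derivation ℝ (Loc N) (Loc N) :=
  Derivation.mk'
    { toFun := fun f => ⟨dirD v f.1, f.2.dirD v⟩
      map_add' := fun f g => Subtype.ext <| funext fun p =>
        deriv_fun_add (f.2.differentiable_line v p) (g.2.differentiable_line v p)
      map_smul' := fun r f => Subtype.ext <| funext fun p =>
        deriv_fun_const_smul r (f.2.differentiable_line v p) }
    (fun f g => Subtype.ext <| funext fun p => by
      have := deriv_fun_mul (f.2.differentiable_line v p) (g.2.differentiable_line v p)
      simp only [zero_smul, add_zero] at this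
      refine this.trans ?_
      simp [dirD]
      ring)

@[simp] theorem coe_dv {N : ℕ} (v : JetPt N) (f : Loc N) : (dv v f : Fn N) = dirD v f.1 := rfl

theorem dv_comm {N : ℕ} (v w : JetPt N) (f : Loc N) : dv v (dv w f) = dv w (dv v f) :=
  Subtype.ext (dirD_comm f.2 v w)

/-- The base coordinate `x^i` as a local function. -/
def xc {N : ℕ} (i : Fin N) : Loc N :=
  ⟨fun p => p.1 i, ∅, fun w => w.1 i, by fun_prop, fun _ => rfl⟩

/-- The jet coordinate `u_J` as a local function. -/
def uc {N : ℕ} (J : MI N) : Loc N :=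
  ⟨fun p => p.2 J, {J}, fun w => w.2 ⟨J, by simp⟩, by fun_prop, fun _ => rfl⟩

theorem dv_xc {N : ℕ} (v : JetPt N) (i : Fin N) : dv v (xc i) = algebraMap ℝ (Loc N) (v.1 i) := by
  refine Subtype.ext (funext fun p => ?_)
  change deriv (fun t : ℝ => p.1 i + t * v.1 i) 0 = v.1 i
  simp

theorem dv_uc {N : ℕ} (v : JetPt N) (J : MI N) : dv v (uc J) = algebraMap ℝ (Loc N) (v.2 J) := by
  refine Subtype.ext (funext fun p => ?_)
  change deriv (fun t : ℝ => p.2 J + t * v.2 J) 0 = v.2 J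
  simp

/-- A local function depends on finitely many jet coordinates. -/
theorem exists_dep {N : ℕ} (f : Loc N) : ∃ T : Finset (MI N), ∀ J ∉ T, dv (vU J) f = 0 := by
  obtain ⟨f, hf⟩ := f
  obtain ⟨S, g, hg, rfl⟩ := (isLocal_iff f).1 hf
  refine ⟨S, fun J hJ => Subtype.ext ?_⟩
  rw [coe_dv, dirD_eq hg]
  have : prS S (vU J) = 0 := by
    refine Prod.ext rfl (funext fun K => ?_)
    have : (K : MI N) ≠ J := fun h => hJ (h ▸ K.2)
    simp [prS, vU, this]
  funext p
  simp [this]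

/-- The value of the total derivative of a local function, as a finite sum over any set of jet
coordinates containing those on which the function depends. -/
noncomputable def dtSum {N : ℕ} (i : Fin N) (T : Finset (MI N)) (f : Loc N) : Loc N :=
  dv (vX i) f + ∑ J ∈ T, uc (inc i J) * dv (vU J) f

theorem Dtot_eq {N : ℕ} (i : Fin N) (f : Loc N) (T : Finset (MI N))
    (hT : ∀ J ∉ T, dv (vU J) f = 0) : Dtot i f.1 = (dtSum i T f : Fn N) := by
  funext p
  unfold Dtot dtSum
  rw [pderivX_eq]
  have : ∀ J ∉ T, p.2 (inc i J) * pderivU J f.1 p = 0 := by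
    intro J hJ
    have := congrFun (congrArg Subtype.val (hT J hJ)) p
    rw [coe_dv, ← pderivU_eq] at this
    simp [this]
  rw [tsum_eq_sum this]
  simp [pderivU_eq, uc, Finset.sum_apply]

theorem dtSum_congr {N : ℕ} (i : Fin N) (f : Loc N) {T T' : Finset (MI N)}
    (hT : ∀ J ∉ T, dv (vU J) f = 0) (hT' : ∀ J ∉ T', dv (vU J) f = 0) :
    dtSum i T f = dtSum i T' f :=
  Subtype.ext ((Dtot_eq i f T hT).symm.trans (Dtot_eq i f T' hT'))

/-- A finite set of jet coordinates on which a local function depends. -/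
noncomputable def dep {N : ℕ} (f : Loc N) : Finset (MI N) := (exists_dep f).choose

theorem dep_spec {N : ℕ} (f : Loc N) : ∀ J ∉ dep f, dv (vU J) f = 0 := (exists_dep f).choose_spec

/-- The total derivative `d/dx^i` as a derivation of `Loc(E)`. -/
noncomputable def Dt {N : ℕ} (i : Fin N) : Derivation ℝ (Loc N) (Loc N) :=
  Derivation.mk'
    { toFun := fun f => dtSum i (dep f) f
      map_add' := fun f g => by
        classical
        have hf : ∀ J ∉ dep f ∪ dep g, dv (vU J) f = 0 := fun J hJ =>
          dep_spec f J (by simp at hJ; exact hJ.1)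
        have hg : ∀ J ∉ dep f ∪ dep g, dv (vU J) g = 0 := fun J hJ =>
          dep_spec g J (by simp at hJ; exact hJ.2)
        have hfg : ∀ J ∉ dep f ∪ dep g, dv (vU J) (f + g) = 0 := fun J hJ => by
          rw [map_add, hf J hJ, hg J hJ, add_zero]
        rw [dtSum_congr i (f + g) (dep_spec _) hfg, dtSum_congr i f (dep_spec _) hf,
          dtSum_congr i g (dep_spec _) hg]
        simp only [dtSum, map_add, mul_add, Finset.sum_add_distrib]
        abel
      map_smul' := fun r f => by
        have hf : ∀ J ∉ dep f, dv (vU J) (r • f) = 0 := fun J hJ => by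
          rw [Derivation.map_smul, dep_spec f J hJ, smul_zero]
        rw [dtSum_congr i (r • f) (dep_spec _) hf]
        simp only [dtSum, Derivation.map_smul, mul_smul_comm, ← Finset.smul_sum, smul_add, RingHom.id_apply] }
    (fun f g => by
      classical
      have hf : ∀ J ∉ dep f ∪ dep g, dv (vU J) f = 0 := fun J hJ =>
        dep_spec f J (by simp at hJ; exact hJ.1)
      have hg : ∀ J ∉ dep f ∪ dep g, dv (vU J) g = 0 := fun J hJ =>
        dep_spec g J (by simp at hJ; exact hJ.2)
      have hfg : ∀ J ∉ dep f ∪ dep g, dv (vU J) (f * g) = 0 := fun J hJ => by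
        rw [Derivation.leibniz, hf J hJ, hg J hJ, smul_zero, smul_zero, add_zero]
      change dtSum i _ (f * g) = f • dtSum i _ g + g • dtSum i _ f
      rw [dtSum_congr i (f * g) (dep_spec _) hfg, dtSum_congr i f (dep_spec _) hf,
        dtSum_congr i g (dep_spec _) hg]
      simp only [dtSum, Derivation.leibniz, smul_eq_mul, mul_add, Finset.mul_sum,
        Finset.sum_add_distrib]
      have e1 : ∀ J, uc (inc i J) * (f * dv (vU J) g) = f * (uc (inc i J) * dv (vU J) g) :=
        fun J => by ring
      have e2 : ∀ J, uc (inc i J) * (g * dv (vU J) f) = g * (uc (inc i J) * dv (vU J) f) :=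
        fun J => by ring
      simp only [e1, e2]
      abel)

theorem Dt_eq {N : ℕ} (i : Fin N) (f : Loc N) (T : Finset (MI N))
    (hT : ∀ J ∉ T, dv (vU J) f = 0) :
    Dt i f = dv (vX i) f + ∑ J ∈ T, uc (inc i J) * dv (vU J) f :=
  dtSum_congr i f (dep_spec f) hT

@[simp] theorem coe_Dt {N : ℕ} (i : Fin N) (f : Loc N) : (Dt i f : Fn N) = Dtot i f.1 :=
  (Dtot_eq i f _ (dep_spec f)).symm

theorem Dt_xc {N : ℕ} (i l : Fin N) : Dt i (xc l) = if i = l then 1 else 0 := by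
  rw [Dt_eq i (xc l) ∅ (fun J _ => by rw [dv_xc]; simp [vU]), dv_xc]
  by_cases h : i = l
  · subst h; simp [vX]
  · simp [vX, h, Ne.symm h]

theorem dvU_xc {N : ℕ} (J : MI N) (l : Fin N) : dv (vU J) (xc l) = 0 := by
  rw [dv_xc]; simp [vU]

theorem Dt_uc {N : ℕ} (i : Fin N) (J : MI N) : Dt i (uc J) = uc (inc i J) := by
  rw [Dt_eq i (uc J) {J} (fun K hK => by rw [dv_uc]; simp at hK; simp [vU, Ne.symm hK])]
  simp [dv_uc, vX, vU]

theorem inc_injective {N : ℕ} (i : Fin N) : Function.Injective (inc i : MI N → MI N) := by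
  intro J K h
  funext l
  have := congrFun h l
  unfold inc at this
  by_cases hl : l = i
  · subst hl; simpa using this
  · simpa [hl] using this

theorem dv_dt {N : ℕ} (v : JetPt N) (i : Fin N) (f : Loc N) (T : Finset (MI N))
    (hT : ∀ J ∉ T, dv (vU J) f = 0) :
    dv v (Dt i f) = Dt i (dv v f) + ∑ J ∈ T, v.2 (inc i J) • dv (vU J) f := by
  rw [Dt_eq i f T hT, Dt_eq i (dv v f) T (fun J hJ => by rw [dv_comm, hT J hJ, map_zero])]
  simp only [map_add, map_sum, Derivation.leibniz, dv_uc, smul_eq_mul, Finset.sum_add_distrib]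
  rw [dv_comm v (vX i), add_assoc]
  congr 2
  · exact Finset.sum_congr rfl fun J _ => by rw [dv_comm]
  · exact Finset.sum_congr rfl fun J _ => by rw [Algebra.smul_def, mul_comm]

/-- `[∂/∂u_{iJ}, d/dx^i] = ∂/∂u_J`. -/
theorem dvU_inc_Dt {N : ℕ} (i : Fin N) (J : MI N) (f : Loc N) :
    dv (vU (inc i J)) (Dt i f) = Dt i (dv (vU (inc i J)) f) + dv (vU J) f := by
  classical
  rw [dv_dt _ i f (insert J (dep f)) (fun K hK => dep_spec f K (by simp at hK; exact hK.2))]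
  congr 1
  rw [Finset.sum_eq_single J]
  · simp [vU]
  · intro K _ hK
    have : inc i K ≠ inc i J := fun h => hK (inc_injective i h)
    simp [vU, this]
  · simp

/-- `[∂/∂u_J, d/dx^i] = 0` when `J` does not involve `i`. -/
theorem dvU_Dt_of_zero {N : ℕ} (i : Fin N) (J : MI N) (hJ : J i = 0) (f : Loc N) :
    dv (vU J) (Dt i f) = Dt i (dv (vU J) f) := by
  rw [dv_dt _ i f (dep f) (dep_spec f), Finset.sum_eq_zero, add_zero]
  intro K _
  have : inc i K ≠ J := by
    rintro rfl
    simp [inc] at hJ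
  simp [vU, this]

theorem inc_comm {N : ℕ} (i l : Fin N) (J : MI N) : inc i (inc l J) = inc l (inc i J) := by
  funext k
  by_cases h : i = l
  · subst h; rfl
  · unfold inc
    by_cases h1 : k = i
    · subst h1; simp [h]
    · by_cases h2 : k = l
      · subst h2; simp [h1]
      · simp [h1, h2]

/-- The total derivatives commute. -/
theorem Dt_comm {N : ℕ} (i l : Fin N) (f : Loc N) : Dt i (Dt l f) = Dt l (Dt i f) := by
  have key : ∀ (T : Finset (MI N)), (∀ J ∉ T, dv (vU J) (Dt i f) = 0) →
      (∀ J ∉ T, dv (vU J) f = 0) →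
      (∀ J ∉ T, dv (vU J) (Dt l f) = 0) → Dt i (Dt l f) = Dt l (Dt i f) := by
    intro T h1 h2 h3
    have hx : dv (vX l) (Dt i f) = Dt i (dv (vX l) f) := by
      rw [dv_dt _ i f T h2]; simp [vX]
    have e1 : Dt i (Dt l f) = Dt i (dv (vX l) f) + ∑ J ∈ T, (uc (inc l J) * Dt i (dv (vU J) f)
        + dv (vU J) f * uc (inc i (inc l J))) := by
      conv_lhs => rw [Dt_eq l f T h2]
      simp only [map_add, map_sum, Derivation.leibniz, Dt_uc, smul_eq_mul]
    have e2 : Dt l (Dt i f) = Dt i (dv (vX l) f) + ∑ J ∈ T, (uc (inc l J) *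
        (Dt i (dv (vU J) f) + ∑ K ∈ T, (vU J).2 (inc i K) • dv (vU K) f)) := by
      conv_lhs => rw [Dt_eq l (Dt i f) T h1]
      rw [hx]
      congr 1
      exact Finset.sum_congr rfl fun J _ => by rw [dv_dt _ i f T h2]
    rw [e1, e2]
    simp only [mul_add, Finset.sum_add_distrib]
    congr 2
    simp only [Finset.mul_sum]
    rw [Finset.sum_comm]
    refine Finset.sum_congr rfl fun K _ => ?_
    by_cases hK : inc i K ∈ T
    · rw [Finset.sum_eq_single (inc i K)]
      · simp [vU, inc_comm l i, mul_comm]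
      · intro J _ hJ
        simp [vU, Ne.symm hJ]
      · exact fun h => (h hK).elim
    · have h0 : dv (vU K) f = 0 := by
        have h4 := h1 _ hK
        rw [dvU_inc_Dt, h2 _ hK, map_zero, zero_add] at h4
        exact h4
      simp [h0]
  classical
  refine key (dep (Dt i f) ∪ dep f ∪ dep (Dt l f)) ?_ ?_ ?_
  all_goals
    intro J hJ
    simp only [Finset.mem_union, not_or] at hJ
    exact dep_spec _ _ (by tauto)

end

section

/-! ### Iterated derivatives -/

section Lists
variable {σ M : Type*} [Monoid M] (d : σ → M)

/-- The product of the powers `d s ^ a s` over a list. -/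
def lp (L : List σ) (a : σ → ℕ) : M := (L.map fun s => d s ^ a s).prod

variable {d}

theorem lp_commute (hd : ∀ s t, Commute (d s) (d t)) (L : List σ) (a : σ → ℕ) (s : σ) (k : ℕ) :
    Commute (d s ^ k) (lp d L a) := by
  induction L with
  | nil => simp [lp]
  | cons t L ih =>
    simp only [lp, List.map_cons, List.prod_cons] at ih ⊢
    exact ((hd s t).pow_pow k (a t)).mul_right ih

theorem lp_add (hd : ∀ s t, Commute (d s) (d t)) (L : List σ) (a b : σ → ℕ) :
    lp d L (a + b) = lp d L a * lp d L b := by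
  induction L with
  | nil => simp [lp]
  | cons t L ih =>
    have h := lp_commute hd L a t (b t)
    simp only [lp, List.map_cons, List.prod_cons, Pi.add_apply, pow_add] at ih h ⊢
    rw [ih, mul_assoc, mul_assoc, ← mul_assoc (d t ^ b t), h.eq]
    simp only [mul_assoc]

theorem lp_eq_one (L : List σ) (a : σ → ℕ) (h : ∀ s ∈ L, a s = 0) : lp d L a = 1 := by
  unfold lp
  refine List.prod_eq_one fun x hx => ?_
  obtain ⟨s, hs, rfl⟩ := List.mem_map.1 hx
  simp [h s hs]

theorem lp_single [DecidableEq σ] {L : List σ} (hL : L.Nodup) {s : σ} (hs : s ∈ L) :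
    lp d L (Pi.single s 1) = d s := by
  induction L with
  | nil => simp at hs
  | cons t L ih =>
    rw [List.nodup_cons] at hL
    have e : lp d (t :: L) (Pi.single s 1) = d t ^ (Pi.single s 1 : σ → ℕ) t *
      lp d L (Pi.single s 1) := by simp [lp]
    rw [e]
    by_cases h : t = s
    · subst h
      rw [lp_eq_one L]
      · simp
      · intro x hx
        have : x ≠ t := fun h => hL.1 (h ▸ hx)
        simp [this]
    · rw [ih hL.2 (by simpa [Ne.symm h] using hs)]
      simp [h]

theorem lp_filter (L : List σ) (a : σ → ℕ) :
    lp d L a = lp d (L.filter fun s => a s ≠ 0) a := by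
  induction L with
  | nil => simp [lp]
  | cons t L ih =>
    have e : lp d (t :: L) a = d t ^ a t * lp d L a := by simp [lp]
    rw [e, ih]
    by_cases h : a t = 0
    · simp [h]
    · simp [h, lp]

theorem lp_cover (hd : ∀ s t, Commute (d s) (d t)) {L L' : List σ} (hL : L.Nodup)
    (hL' : L'.Nodup) (a : σ → ℕ) (h : ∀ s, a s ≠ 0 → s ∈ L) (h' : ∀ s, a s ≠ 0 → s ∈ L') :
    lp d L a = lp d L' a := by
  rw [lp_filter L, lp_filter L']
  have hp : (L.filter fun s => a s ≠ 0).Perm (L'.filter fun s => a s ≠ 0) := by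
    rw [List.perm_ext_iff_of_nodup (hL.filter _) (hL'.filter _)]
    intro s
    simp only [List.mem_filter, decide_eq_true_eq]
    exact ⟨fun x => ⟨h' s x.2, x.2⟩, fun x => ⟨h s x.2, x.2⟩⟩
  refine (hp.map _).prod_eq' ?_
  refine List.pairwise_of_forall_mem_list fun x hx y hy => ?_
  obtain ⟨s, -, rfl⟩ := List.mem_map.1 hx
  obtain ⟨t, -, rfl⟩ := List.mem_map.1 hy
  exact (hd s t).pow_pow _ _

end Lists

variable {N n : ℕ}

/-- The total derivative as a linear endomorphism of `Loc(E)`. -/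
noncomputable def DtE (i : Fin N) : Module.End ℝ (Loc N) := (Dt i).toLinearMap

/-- `∂/∂u_J` as a linear endomorphism of `Loc(E)`. -/
noncomputable def duE (J : MI N) : Module.End ℝ (Loc N) := (dv (vU J)).toLinearMap

@[simp] theorem DtE_apply (i : Fin N) (f : Loc N) : DtE i f = Dt i f := rfl
@[simp] theorem duE_apply (J : MI N) (f : Loc N) : duE J f = dv (vU J) f := rfl

theorem DtE_comm (i l : Fin N) : Commute (DtE i : Module.End ℝ (Loc N)) (DtE l) :=
  LinearMap.ext fun f => Dt_comm i l f

theorem duE_comm (J K : MI N) : Commute (duE J : Module.End ℝ (Loc N)) (duE K) :=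
  LinearMap.ext fun f => dv_comm _ _ f

/-- `(d/dx)^I` on local functions. -/
noncomputable def dpow (I : MI N) : Module.End ℝ (Loc N) := lp DtE (List.finRange N) I

/-- `(∂/∂u)^α` on local functions. -/
noncomputable def upow (α : MI N →₀ ℕ) : Module.End ℝ (Loc N) := lp duE α.support.toList α

theorem coe_DtE_pow (i : Fin N) (k : ℕ) (f : Loc N) :
    ((DtE i ^ k) f : Fn N) = (Dtot i)^[k] f.1 := by
  induction k generalizing f with
  | zero => rfl
  | succ k ih =>
    rw [pow_succ, Module.End.mul_apply, ih, Function.iterate_succ_apply, DtE_apply, coe_Dt]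

theorem coe_duE_pow (J : MI N) (k : ℕ) (f : Loc N) :
    ((duE J ^ k) f : Fn N) = (pderivU J)^[k] f.1 := by
  induction k generalizing f with
  | zero => rfl
  | succ k ih =>
    rw [pow_succ, Module.End.mul_apply, ih, Function.iterate_succ_apply, duE_apply, coe_dv,
      pderivU_eq]

theorem coe_dpow (I : MI N) (f : Loc N) : (dpow I f : Fn N) = DPow I f.1 := by
  unfold dpow DPow
  generalize List.finRange N = L
  induction L with
  | nil => rfl
  | cons i L ih =>
    simp only [lp, List.map_cons, List.prod_cons, List.foldr_cons, Module.End.mul_apply,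
      Function.comp_apply] at ih ⊢
    rw [coe_DtE_pow, ih]

theorem coe_upow (α : MI N →₀ ℕ) (f : Loc N) : (upow α f : Fn N) = UPow α f.1 := by
  unfold upow UPow
  generalize α.support.toList = L
  induction L with
  | nil => rfl
  | cons J L ih =>
    simp only [lp, List.map_cons, List.prod_cons, List.foldr_cons, Module.End.mul_apply,
      Function.comp_apply] at ih ⊢
    rw [coe_duE_pow, ih]

theorem dpow_zero : (dpow 0 : Module.End ℝ (Loc N)) = 1 := lp_eq_one _ _ fun _ _ => rfl

theorem dpow_add_single (I : MI N) (i : Fin N) :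
    dpow (I + Pi.single i 1) = dpow I * DtE i := by
  unfold dpow
  rw [lp_add DtE_comm, lp_single (List.nodup_finRange N) (List.mem_finRange i)]

theorem dpow_add_single' (I : MI N) (i : Fin N) :
    dpow (I + Pi.single i 1) = DtE i * dpow I := by
  rw [dpow_add_single]
  have := lp_commute DtE_comm (List.finRange N) I i 1
  rw [pow_one] at this
  exact this.eq.symm

theorem dpow_Dt (I : MI N) (i : Fin N) (f : Loc N) : dpow I (Dt i f) = Dt i (dpow I f) := by
  have := congrArg (fun E => E f) ((dpow_add_single I i).symm.trans (dpow_add_single' I i))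
  exact this

theorem upow_zero : (upow 0 : Module.End ℝ (Loc N)) = 1 := lp_eq_one _ _ fun _ _ => rfl

theorem upow_cover {L : List (MI N)} (hL : L.Nodup) (α : MI N →₀ ℕ)
    (h : ∀ J, α J ≠ 0 → J ∈ L) : upow α = lp duE L α :=
  lp_cover duE_comm (Finset.nodup_toList _) hL _ (fun J hJ => by simpa using hJ) h

theorem upow_add (α β : MI N →₀ ℕ) : upow (α + β) = upow α * upow β := by
  classical
  have hL := (α.support ∪ β.support).nodup_toList
  rw [upow_cover hL (α + β), upow_cover hL α, upow_cover hL β, ← lp_add duE_comm]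
  · rfl
  · intro J hJ; simpa using Or.inr hJ
  · intro J hJ; simpa using Or.inl hJ
  · intro J hJ
    simp only [Finset.mem_toList, Finset.mem_union, Finsupp.mem_support_iff]
    by_contra! h
    simp [h.1, h.2] at hJ

theorem upow_single (J : MI N) : upow (Finsupp.single J 1) = duE J := by
  classical
  rw [upow_cover (L := [J]) (by simp)]
  · simp [lp]
  · intro K hK
    by_contra h
    simp at h
    simp [Ne.symm h] at hK

theorem upow_single_add (J : MI N) (α : MI N →₀ ℕ) (f : Loc N) :
    upow (Finsupp.single J 1 + α) f = dv (vU J) (upow α f) := by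
  rw [upow_add, upow_single]; rfl

theorem upow_add_single (α : MI N →₀ ℕ) (J : MI N) (f : Loc N) :
    upow (α + Finsupp.single J 1) f = upow α (dv (vU J) f) := by
  rw [upow_add, upow_single]; rfl

theorem upow_eq_zero (α : MI N →₀ ℕ) (J : MI N) (hJ : α J ≠ 0) (f : Loc N)
    (hf : dv (vU J) f = 0) : upow α f = 0 := by
  have : α = (α - Finsupp.single J 1) + Finsupp.single J 1 := by
    refine (tsub_add_cancel_of_le ?_).symm
    rw [Finsupp.single_le_iff]; omega
  rw [this, upow_add_single, hf, map_zero]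

theorem mi_induction {p : MI N → Prop} (h0 : p 0)
    (h1 : ∀ (i : Fin N) (I : MI N), p I → p (I + Pi.single i 1)) (I : MI N) : p I := by
  obtain ⟨k, hk⟩ : ∃ k, ∑ i, I i = k := ⟨_, rfl⟩
  induction k generalizing I with
  | zero =>
    have : I = 0 := funext fun i => by
      simpa using (Finset.sum_eq_zero_iff.1 hk) i (Finset.mem_univ i)
    exact this ▸ h0
  | succ k ih =>
    obtain ⟨i, -, hi⟩ : ∃ i ∈ Finset.univ, I i ≠ 0 := by
      by_contra! h
      rw [Finset.sum_eq_zero h] at hk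
      omega
    have e : I = (I - Pi.single i 1) + Pi.single i 1 := by
      refine (tsub_add_cancel_of_le ?_).symm
      intro l
      by_cases h : l = i
      · subst h; simp; omega
      · simp [h]
    rw [e]
    refine h1 i _ (ih _ ?_)
    rw [e] at hk
    simp only [Pi.add_apply, Finset.sum_add_distrib, Finset.sum_pi_single', Finset.mem_univ,
      if_true] at hk
    omega

theorem fs_induction {p : (MI N →₀ ℕ) → Prop} (h0 : p 0)
    (h1 : ∀ J α, p α → p (Finsupp.single J 1 + α)) (α : MI N →₀ ℕ) : p α := by
  induction α using Finsupp.induction with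
  | zero => exact h0
  | single_add J k α _ _ ih =>
    clear * - ih h1
    induction k with
    | zero => simpa using ih
    | succ k ihk =>
      rw [add_comm k 1, Finsupp.single_add, add_assoc]
      exact h1 _ _ ihk

theorem upow_xc_mul (α : MI N →₀ ℕ) (i : Fin N) (f : Loc N) :
    upow α (xc i * f) = xc i * upow α f := by
  induction α using fs_induction with
  | h0 => simp [upow_zero]
  | h1 J α ih =>
    rw [upow_single_add, upow_single_add, ih, Derivation.leibniz, dvU_xc]
    simp

theorem degf_le_iff (α : MI N →₀ ℕ) (m : ℕ) :
    degf α ≤ m ↔ ∀ J, α J ≠ 0 → ∑ i, J i ≤ m := by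
  simp [degf, Finset.sup_le_iff]

theorem le_degf (α : MI N →₀ ℕ) (J : MI N) (h : α J ≠ 0) : ∑ i, J i ≤ degf α :=
  (degf_le_iff α _).1 le_rfl J h

theorem degf_single_add (J : MI N) (α : MI N →₀ ℕ) :
    degf (Finsupp.single J 1 + α) = max (∑ i, J i) (degf α) := by
  classical
  refine le_antisymm ((degf_le_iff _ _).2 fun K hK => ?_) (max_le ?_ ?_)
  · by_cases h : J = K
    · subst h; exact le_max_left _ _
    · exact le_max_of_le_right (le_degf α K (by simpa [Finsupp.single_apply, h] using hK))
  · exact le_degf _ J (by simp)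
  · refine (degf_le_iff _ _).2 fun K hK => le_degf _ K ?_
    simp [hK]

theorem inc_eq_add (i : Fin N) (J : MI N) : inc i J = J + Pi.single i 1 := by
  funext l
  by_cases h : l = i
  · subst h; simp [inc]
  · simp [inc, h]

theorem sum_inc (i : Fin N) (J : MI N) : ∑ l, inc i J l = ∑ l, J l + 1 := by
  simp [inc_eq_add, Finset.sum_add_distrib]

/-- Commuting a total derivative past `(∂/∂u)^α` produces vertical derivatives `(∂/∂u)^β` whose
degree drops by at most one. -/
theorem upow_Dt (α : MI N →₀ ℕ) (i : Fin N) : ∃ L : List (MI N →₀ ℕ),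
    (∀ β ∈ L, degf α ≤ degf β + 1) ∧
      ∀ f, upow α (Dt i f) = Dt i (upow α f) + (L.map fun β => upow β f).sum := by
  induction α using fs_induction with
  | h0 => exact ⟨[], by simp, by simp [upow_zero]⟩
  | h1 J α ih =>
    obtain ⟨L, hL, e⟩ := ih
    have hs : ∀ f, dv (vU J) (L.map fun β => upow β f).sum =
        ((L.map (Finsupp.single J 1 + ·)).map fun β => upow β f).sum := by
      intro f
      rw [map_list_sum, List.map_map, List.map_map]
      simp only [Function.comp_def, upow_single_add]
    have hd : ∀ β ∈ L.map (Finsupp.single J 1 + ·),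
        degf (Finsupp.single J 1 + α) ≤ degf β + 1 := by
      intro β hβ
      obtain ⟨γ, hγ, rfl⟩ := List.mem_map.1 hβ
      have := hL γ hγ
      rw [degf_single_add, degf_single_add]
      omega
    by_cases h : J i = 0
    · refine ⟨L.map (Finsupp.single J 1 + ·), hd, fun f => ?_⟩
      rw [upow_single_add, e, map_add, dvU_Dt_of_zero i J h, hs, upow_single_add]
    · obtain ⟨K, rfl⟩ : ∃ K, J = inc i K := by
        refine ⟨Function.update J i (J i - 1), ?_⟩
        have : J i - 1 + 1 = J i := by omega
        simp [inc, this]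
      refine ⟨(Finsupp.single K 1 + α) :: L.map (Finsupp.single (inc i K) 1 + ·), ?_, fun f => ?_⟩
      · intro β hβ
        rcases List.mem_cons.1 hβ with rfl | hβ
        · rw [degf_single_add, degf_single_add, sum_inc]
          omega
        · exact hd β hβ
      · rw [upow_single_add, e, map_add, dvU_inc_Dt i K, hs, upow_single_add, List.map_cons,
          List.sum_cons, upow_single_add, add_assoc]

end

section

/-! ### Multilinear local differential operators on the algebra of local functions -/

/-- Maps `Loc(E)^n → Loc(E)`, not assumed to be differential operators. -/
abbrev W (N n : ℕ) := (Fin n → Loc N) → Loc N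

/-- The total vertical degree `Σ_j deg_f(α_j)` of an index. -/
def deg {N n : ℕ} (I : Idx N n) : ℕ := ∑ j, degf (I.2 j)

/-- Local finiteness of a family of local coefficients. -/
def GoodL {N n : ℕ} (c : Idx N n → Loc N) : Prop := ∀ m, {I | c I ≠ 0 ∧ deg I ≤ m}.Finite

/-- All the entries of the tuple `f` depend only on jet coordinates of order at most `m`. -/
def Bd {N n : ℕ} (m : ℕ) (f : Fin n → Loc N) : Prop :=
  ∀ j (J : MI N), m < ∑ i, J i → dv (vU J) (f j) = 0

theorem exists_Bd {N n : ℕ} (f : Fin n → Loc N) : ∃ m, Bd m f := by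
  refine ⟨Finset.univ.sup fun j => (dep (f j)).sup fun J => ∑ i, J i, fun j J hJ => ?_⟩
  refine dep_spec _ _ fun h => ?_
  have h1 : ∑ i, J i ≤ (dep (f j)).sup fun J => ∑ i, J i :=
    Finset.le_sup (f := fun J : MI N => ∑ i, J i) h
  have h2 : ((dep (f j)).sup fun J => ∑ i, J i) ≤
      Finset.univ.sup fun j => (dep (f j)).sup fun J => ∑ i, J i :=
    Finset.le_sup (f := fun j => (dep (f j)).sup fun J => ∑ i, J i) (Finset.mem_univ j)
  omega

variable {N n : ℕ} [NeZero n]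

/-- The part of a polarized monomial to which `(d/dx)^{I_1}` is applied. -/
noncomputable def pm (I : Idx N n) : W N n := fun f =>
  ∏ j, if j = (0 : Fin n) then upow (I.2 j) (f j) else dpow (I.1 j) (upow (I.2 j) (f j))

/-- The polarized monomial operator with index `I`. -/
noncomputable def mono (I : Idx N n) : W N n := fun f => dpow (I.1 0) (pm I f)

theorem pm_eq_zero {m : ℕ} {f : Fin n → Loc N} (hf : Bd m f) (I : Idx N n)
    (h : n * m < deg I) : pm I f = 0 := by
  obtain ⟨j, hj⟩ : ∃ j, m < degf (I.2 j) := by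
    by_contra! hc
    have : deg I ≤ ∑ _j : Fin n, m := Finset.sum_le_sum fun j _ => hc j
    simp at this
    omega
  have hu : upow (I.2 j) (f j) = 0 := by
    by_contra hne
    have : degf (I.2 j) ≤ m := by
      rw [degf_le_iff]
      intro J hJ
      by_contra! hlt
      exact hne (upow_eq_zero _ J hJ _ (hf j J hlt))
    omega
  refine Finset.prod_eq_zero (Finset.mem_univ j) ?_
  rw [hu]
  simp

theorem mono_eq_zero {m : ℕ} {f : Fin n → Loc N} (hf : Bd m f) (I : Idx N n)
    (h : n * m < deg I) : mono I f = 0 := by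
  rw [mono, pm_eq_zero hf I h, map_zero]

/-- The operator with coefficients `c` in polarized form. -/
noncomputable def real (c : Idx N n → Loc N) : W N n := fun f => ∑ᶠ I, c I * mono I f

theorem exists_term_ne_zero {T M : Type*} [AddCommMonoid M] {g : T → M}
    (h : ∑ᶠ t, g t ≠ 0) : ∃ t, g t ≠ 0 := by
  by_contra! h'
  exact h (finsum_eq_zero_of_forall_eq_zero h')

theorem real_supp {c : Idx N n → Loc N} {m : ℕ} {f : Fin n → Loc N} (hf : Bd m f) :
    (Function.support fun I => c I * mono I f) ⊆ {I | c I ≠ 0 ∧ deg I ≤ n * m} := by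
  intro I hI
  refine ⟨fun h => hI (by simp [h]), ?_⟩
  by_contra! h
  exact hI (by simp [mono_eq_zero hf I h])

theorem real_finite {c : Idx N n → Loc N} (hc : GoodL c) (f : Fin n → Loc N) :
    (Function.support fun I => c I * mono I f).Finite := by
  obtain ⟨m, hm⟩ := exists_Bd f
  exact (hc _).subset (real_supp hm)

/-- Locally finite sums of operators, at the level of coefficients. -/
theorem real_sum {T : Type*} (c : T → Idx N n → Loc N) (d : T → ℕ) (hc : ∀ t, GoodL (c t))
    (hd : ∀ t I, c t I ≠ 0 → d t ≤ deg I) (hfin : ∀ m, {t | c t ≠ 0 ∧ d t ≤ m}.Finite) :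
    GoodL (fun I => ∑ᶠ t, c t I) ∧
      ∀ f, real (fun I => ∑ᶠ t, c t I) f = ∑ᶠ t, real (c t) f := by
  classical
  have hU : ∀ m, (⋃ t ∈ {t | c t ≠ 0 ∧ d t ≤ m}, {I | c t I ≠ 0 ∧ deg I ≤ m}).Finite :=
    fun m => (hfin m).biUnion fun t _ => hc t m
  have hsub : ∀ m I, deg I ≤ m → (Function.support fun t => c t I) ⊆ {t | c t ≠ 0 ∧ d t ≤ m} := by
    intro m I hI t ht
    exact ⟨fun h => ht (by simp [h]), (hd t I ht).trans hI⟩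
  refine ⟨fun m => (hU m).subset ?_, fun f => ?_⟩
  · rintro I ⟨h1, h2⟩
    obtain ⟨t, ht⟩ := exists_term_ne_zero h1
    exact Set.mem_biUnion (hsub m I h2 ht) ⟨ht, h2⟩
  · obtain ⟨m, hm⟩ := exists_Bd f
    set TT := (hfin (n * m)).toFinset with hTT
    set II := (hU (n * m)).toFinset with hII
    have h1 : ∀ t, real (c t) f = ∑ I ∈ II, c t I * mono I f := by
      intro t
      refine finsum_eq_sum_of_support_subset _ fun I hI => ?_
      have h := real_supp hm hI
      rw [hII, Set.Finite.coe_toFinset]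
      exact Set.mem_biUnion (hsub _ I h.2 h.1) h
    have h2 : ∀ t, t ∉ TT → real (c t) f = 0 := by
      intro t ht
      rw [h1]
      refine Finset.sum_eq_zero fun I _ => ?_
      by_contra hne
      have h := real_supp hm hne
      exact ht (by rw [hTT, Set.Finite.mem_toFinset]; exact hsub _ I h.2 h.1)
    have h3 : ∑ᶠ t, real (c t) f = ∑ t ∈ TT, real (c t) f :=
      finsum_eq_sum_of_support_subset _ fun t ht => by
        by_contra hn
        exact ht (h2 t hn)
    rw [h3]
    simp only [h1]
    rw [Finset.sum_comm]
    have h4 : real (fun I => ∑ᶠ t, c t I) f = ∑ I ∈ II, (∑ᶠ t, c t I) * mono I f := by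
      refine finsum_eq_sum_of_support_subset _ fun I hI => ?_
      have h := real_supp hm hI
      obtain ⟨t, ht⟩ := exists_term_ne_zero h.1
      rw [hII, Set.Finite.coe_toFinset]
      exact Set.mem_biUnion (hsub _ I h.2 ht) ⟨ht, h.2⟩
    rw [h4]
    refine Finset.sum_congr rfl fun I _ => ?_
    by_cases hI : deg I ≤ n * m
    · rw [finsum_eq_sum_of_support_subset (s := TT), Finset.sum_mul]
      rw [hTT, Set.Finite.coe_toFinset]
      exact hsub _ I hI
    · simp [mono_eq_zero hm I (not_le.1 hI)]

/-- `A` is a local differential operator all of whose terms have vertical degree at least `m`. -/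
def InV (m : ℕ) (A : W N n) : Prop :=
  ∃ c : Idx N n → Loc N, GoodL c ∧ (∀ I, c I ≠ 0 → m ≤ deg I) ∧ A = real c

theorem InV.mono {m m' : ℕ} (h : m ≤ m') {A : W N n} (hA : InV m' A) : InV m A := by
  obtain ⟨c, h1, h2, h3⟩ := hA
  exact ⟨c, h1, fun I hI => h.trans (h2 I hI), h3⟩

theorem InV.zero (m : ℕ) : InV m (0 : W N n) :=
  ⟨0, fun m => by simp, by simp, by funext f; simp [real]⟩

/-- A locally finite sum of local differential operators is one. -/
theorem InV.finsum {T : Type*} (A : T → W N n) (d : T → ℕ) (m₀ : ℕ) (hA : ∀ t, InV (d t) (A t))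
    (hfin : ∀ m, {t | A t ≠ 0 ∧ d t ≤ m}.Finite) (hm : ∀ t, A t ≠ 0 → m₀ ≤ d t) :
    InV m₀ (fun f => ∑ᶠ t, A t f) := by
  classical
  have : ∀ t, ∃ c : Idx N n → Loc N, GoodL c ∧ (∀ I, c I ≠ 0 → d t ≤ deg I) ∧ A t = real c ∧
      (A t = 0 → c = 0) := by
    intro t
    by_cases h : A t = 0
    · exact ⟨0, fun m => by simp, by simp, by funext f; simp [h, real], fun _ => rfl⟩
    · obtain ⟨c, h1, h2, h3⟩ := hA t
      exact ⟨c, h1, h2, h3, fun h' => (h h').elim⟩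
  choose c h1 h2 h3 h4 using this
  have hs := real_sum c d h1 h2 fun m => (hfin m).subset fun t ht => ⟨fun h => ht.1 (h4 t h), ht.2⟩
  refine ⟨_, hs.1, fun I hI => ?_, funext fun f => ?_⟩
  · obtain ⟨t, ht⟩ := exists_term_ne_zero hI
    refine (hm t fun h => ht ?_).trans (h2 t I ht)
    rw [h4 t h]; rfl
  · rw [hs.2]
    exact finsum_congr fun t => by rw [h3]

theorem InV.add {m : ℕ} {A B : W N n} (hA : InV m A) (hB : InV m B) : InV m (A + B) := by
  have := InV.finsum (T := Bool) (fun t => if t then A else B) (fun _ => m) m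
    (fun t => by cases t <;> simpa) (fun _ => Set.toFinite _) (fun _ _ => le_rfl)
  convert this using 1
  funext f
  rw [finsum_eq_sum_of_fintype]
  simp

theorem InV.locSmul {m : ℕ} {A : W N n} (a : Loc N) (hA : InV m A) : InV m (a • A) := by
  obtain ⟨c, h1, h2, rfl⟩ := hA
  refine ⟨fun I => a * c I, fun m => (h1 m).subset fun I hI => ⟨fun h => hI.1 (by simp [h]), hI.2⟩,
    fun I hI => h2 I fun h => hI (by simp [h]), funext fun f => ?_⟩
  change a * ∑ᶠ I, c I * _ = _
  rw [mul_finsum' _ _ (real_finite h1 f)]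
  exact finsum_congr fun I => by ring

/-- The space of local differential operators all of whose terms have vertical degree at least
`m`. -/
def Vs (m : ℕ) : Submodule ℝ (W N n) where
  carrier := {A | InV m A}
  add_mem' := InV.add
  zero_mem' := InV.zero m
  smul_mem' r A hA := by
    have := hA.locSmul (algebraMap ℝ (Loc N) r)
    rwa [algebraMap_smul] at this

theorem Vs_mono {m m' : ℕ} (h : m ≤ m') : (Vs m' : Submodule ℝ (W N n)) ≤ Vs m :=
  fun _ hA => InV.mono h hA

theorem Vs_locSmul {m : ℕ} {A : W N n} (a : Loc N) (hA : A ∈ Vs m) : a • A ∈ Vs m :=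
  InV.locSmul a hA

theorem mono_mem (I : Idx N n) : mono I ∈ (Vs (deg I) : Submodule ℝ (W N n)) := by
  classical
  have hne : ∀ K, (Pi.single I 1 : Idx N n → Loc N) K ≠ 0 → K = I := by
    intro K hK
    by_contra h
    exact hK (by simp [h])
  refine ⟨Pi.single I 1, fun m => (Set.finite_singleton I).subset fun K hK => hne K hK.1,
    fun K hK => (hne K hK) ▸ le_rfl, funext fun f => ?_⟩
  rw [real, finsum_eq_single _ I]
  · simp
  · intro K hK
    simp [hK]

theorem smul_mono_mem (a : Loc N) (I : Idx N n) : a • mono I ∈ (Vs (deg I) : Submodule ℝ (W N n)) :=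
  Vs_locSmul a (mono_mem I)

theorem Vs_apply_eq_zero {d m : ℕ} {A : W N n} (hA : A ∈ Vs d) {f : Fin n → Loc N} (hf : Bd m f)
    (h : n * m < d) : A f = 0 := by
  obtain ⟨c, h1, h2, rfl⟩ := hA
  rw [real, finsum_eq_zero_of_forall_eq_zero]
  intro I
  by_contra hne
  have := real_supp hf hne
  have := h2 I this.1
  have := this.trans (real_supp hf hne).2
  omega

/-- Extension of a termwise construction to locally finite sums. -/
theorem ext_mem {c : Idx N n → Loc N} (hc : GoodL c) (k : ℕ) (B : Idx N n → W N n)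
    (hB : ∀ I, B I ∈ Vs (deg I - k)) (h0 : ∀ I, c I = 0 → B I = 0) (m₀ : ℕ)
    (hm : ∀ I, c I ≠ 0 → m₀ ≤ deg I - k) :
    (fun f => ∑ᶠ I, B I f) ∈ (Vs m₀ : Submodule ℝ (W N n)) :=
  InV.finsum B (fun I => deg I - k) m₀ hB (fun m => (hc (m + k)).subset fun I hI =>
    ⟨fun h => hI.1 (h0 I h), by have := hI.2; omega⟩) (fun I hI => hm I fun h => hI (h0 I h))

theorem ext_finite {c : Idx N n → Loc N} (hc : GoodL c) (k : ℕ) (B : Idx N n → W N n)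
    (hB : ∀ I, B I ∈ Vs (deg I - k)) (h0 : ∀ I, c I = 0 → B I = 0) (f : Fin n → Loc N) :
    (Function.support fun I => B I f).Finite := by
  obtain ⟨m, hm⟩ := exists_Bd f
  refine (hc (n * m + k)).subset fun I hI => ⟨fun h => hI (by simp [h0 I h]), ?_⟩
  by_contra! h
  exact hI (Vs_apply_eq_zero (hB I) hm (by omega))

end

section

/-! ### Postcomposition, precomposition and commutators -/

variable {N n : ℕ}

/-- Postcomposition with the total derivative, `A ↦ d/dx^i ∘ A`. -/
noncomputable def XO (i : Fin N) : Module.End ℝ (W N n) where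
  toFun A f := Dt i (A f)
  map_add' A B := by funext f; simp
  map_smul' r A := by funext f; simp

/-- Precomposition with the total derivative in the `j`-th argument, `A ↦ A ∘ d/dx^i_j`. -/
noncomputable def ZO (j : Fin n) (i : Fin N) : Module.End ℝ (W N n) where
  toFun A f := A (Function.update f j (Dt i (f j)))
  map_add' _ _ := rfl
  map_smul' _ _ := rfl

@[simp] theorem XO_apply (i : Fin N) (A : W N n) (f) : XO i A f = Dt i (A f) := rfl
@[simp] theorem ZO_apply (j : Fin n) (i : Fin N) (A : W N n) (f) :
    ZO j i A f = A (Function.update f j (Dt i (f j))) := rfl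

theorem XO_comm (i l : Fin N) (A : W N n) : XO i (XO l A) = XO l (XO i A) :=
  funext fun f => Dt_comm i l (A f)

theorem XO_ZO (l : Fin N) (j : Fin n) (i : Fin N) (A : W N n) :
    XO l (ZO j i A) = ZO j i (XO l A) := rfl

theorem ZO_comm (j k : Fin n) (i l : Fin N) (A : W N n) :
    ZO j i (ZO k l A) = ZO k l (ZO j i A) := by
  funext f
  simp only [ZO_apply]
  by_cases h : j = k
  · subst h; simp [Dt_comm i l]
  · rw [Function.update_of_ne h, Function.update_of_ne (Ne.symm h), Function.update_comm h]

theorem XO_smul (i : Fin N) (a : Loc N) (A : W N n) :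
    XO i (a • A) = Dt i a • A + a • XO i A := by
  funext f
  simp only [XO_apply, Pi.smul_apply, Pi.add_apply, smul_eq_mul, Derivation.leibniz]
  ring

variable [NeZero n]

/-- The commutator with multiplication of the first argument by the coordinate `x^i`:
`A ↦ (f ↦ A(x^i f_1, f_2, …) - x^i A(f_1, f_2, …))`. On polarized operators it acts as the formal
derivative with respect to the symbol of `d/dy_1^i`. -/
noncomputable def YO (i : Fin N) : Module.End ℝ (W N n) where
  toFun A f := A (Function.update f 0 (xc i * f 0)) - xc i * A f
  map_add' A B := by funext f; simp only [Pi.add_apply]; ring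
  map_smul' r A := by
    funext f
    simp only [Pi.smul_apply, RingHom.id_apply, smul_sub, mul_smul_comm]

theorem YO_apply (i : Fin N) (A : W N n) (f) :
    YO i A f = A (Function.update f 0 (xc i * f 0)) - xc i * A f := rfl

theorem YO_comm (i l : Fin N) (A : W N n) : YO i (YO l A) = YO l (YO i A) := by
  funext f
  simp only [YO_apply, Function.update_self, Function.update_idem]
  rw [mul_left_comm (xc l) (xc i)]
  ring

theorem YO_XO (i l : Fin N) (A : W N n) :
    YO i (XO l A) = XO l (YO i A) + (if i = l then A else 0) := by
  funext f
  simp only [YO_apply, XO_apply, Pi.add_apply, map_sub, Derivation.leibniz, Dt_xc, smul_eq_mul]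
  by_cases h : i = l
  · subst h; simp; ring
  · simp [h, Ne.symm h]

theorem YO_XO_of_ne {i l : Fin N} (h : i ≠ l) (A : W N n) : YO i (XO l A) = XO l (YO i A) := by
  rw [YO_XO, if_neg h, add_zero]

theorem YO_smul (i : Fin N) (a : Loc N) (A : W N n) : YO i (a • A) = a • YO i A := by
  funext f
  simp only [YO_apply, Pi.smul_apply, smul_eq_mul]
  ring

/-- Replace the outer multi-index `I_1`. -/
def setK (I : Idx N n) (K : MI N) : Idx N n := (Function.update I.1 0 K, I.2)

@[simp] theorem deg_setK (I : Idx N n) (K : MI N) : deg (setK I K) = deg I := rfl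

@[simp] theorem setK_self (I : Idx N n) : setK I (I.1 0) = I := by simp [setK]

/-- The factor of a polarized monomial acting on the `j`-th argument. -/
noncomputable def fac (I : Idx N n) (j : Fin n) (g : Loc N) : Loc N :=
  if j = 0 then upow (I.2 j) g else dpow (I.1 j) (upow (I.2 j) g)

theorem pm_eq (I : Idx N n) (f : Fin n → Loc N) : pm I f = ∏ j, fac I j (f j) := rfl

theorem pm_setK (I : Idx N n) (K : MI N) : pm (setK I K) = pm I := by
  funext f
  rw [pm_eq, pm_eq]
  refine Finset.prod_congr rfl fun j _ => ?_
  by_cases h : j = 0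
  · simp [fac, h, setK]
  · simp [fac, h, setK]

theorem mono_setK (I : Idx N n) (K : MI N) (f) : mono (setK I K) f = dpow K (pm I f) := by
  rw [mono, pm_setK]
  simp [setK]

theorem mono_setK_succ (I : Idx N n) (K : MI N) (i : Fin N) :
    mono (setK I (K + Pi.single i 1)) = XO i (mono (setK I K)) := by
  funext f
  rw [XO_apply, mono_setK, mono_setK, dpow_add_single']
  rfl

theorem pm_update (I : Idx N n) (f : Fin n → Loc N) (j : Fin n) (g : Loc N) :
    pm I (Function.update f j g) = fac I j g * ∏ k ∈ Finset.univ.erase j, fac I k (f k) := by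
  rw [pm_eq, ← Finset.mul_prod_erase _ _ (Finset.mem_univ j), Function.update_self]
  congr 1
  exact Finset.prod_congr rfl fun k hk => by
    rw [Function.update_of_ne (Finset.ne_of_mem_erase hk)]

theorem YO_mono_zero (I : Idx N n) (i : Fin N) : YO i (mono (setK I 0)) = 0 := by
  funext f
  rw [YO_apply, mono_setK, mono_setK, pm_update, pm_eq,
    ← Finset.mul_prod_erase _ _ (Finset.mem_univ 0)]
  simp only [dpow_zero, Module.End.one_apply, fac, if_true, upow_xc_mul, Pi.zero_apply]
  ring

theorem XO_term (i : Fin N) (a : Loc N) (I : Idx N n) :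
    XO i (a • mono I) = Dt i a • mono I + a • mono (setK I (I.1 0 + Pi.single i 1)) := by
  rw [XO_smul, mono_setK_succ, setK_self]

theorem XO_mem {d : ℕ} (i : Fin N) {A : W N n} (hA : A ∈ Vs d) : XO i A ∈ Vs d := by
  obtain ⟨c, h1, h2, rfl⟩ := hA
  have hB : ∀ I, XO i (c I • mono I) ∈ (Vs (deg I - 0) : Submodule ℝ (W N n)) := fun I => by
    rw [XO_term]
    exact add_mem (smul_mono_mem _ I) (smul_mono_mem _ (setK I _))
  have := ext_mem h1 0 (fun I => XO i (c I • mono I)) hB (fun I hI => by simp [hI]) d h2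
  convert this using 1
  funext f
  exact (Dt i).toLinearMap.toAddMonoidHom.map_finsum (real_finite h1 f)

theorem Dt_prod (i : Fin N) {ι : Type*} [DecidableEq ι] (s : Finset ι) (g : ι → Loc N) :
    Dt i (∏ k ∈ s, g k) = ∑ k ∈ s, Dt i (g k) * ∏ l ∈ s.erase k, g l := by
  induction s using Finset.induction_on with
  | empty => simp
  | insert a s ha ih =>
    rw [Finset.prod_insert ha, Finset.sum_insert ha, Derivation.leibniz, ih,
      Finset.erase_insert ha, smul_eq_mul, smul_eq_mul, Finset.mul_sum, add_comm]
    congr 1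
    · ring
    · refine Finset.sum_congr rfl fun k hk => ?_
      have hne : k ≠ a := fun h => ha (h ▸ hk)
      rw [Finset.erase_insert_of_ne (Ne.symm hne), Finset.prod_insert
        (fun h => ha (Finset.mem_of_mem_erase h))]
      ring

/-- Replace the vertical exponent `α_j`. -/
noncomputable def setU (I : Idx N n) (j : Fin n) (β : MI N →₀ ℕ) : Idx N n :=
  (I.1, Function.update I.2 j β)

/-- Increase the multi-index `I_k` in direction `i`. -/
def incD (I : Idx N n) (k : Fin n) (i : Fin N) : Idx N n :=
  (Function.update I.1 k (I.1 k + Pi.single i 1), I.2)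

/-- Precomposing a polarized monomial with a total derivative gives a combination of polarized
monomials of vertical degree at least `deg I - 1`. For the first argument `d/dx_1` is rewritten as
`d/dy_1 - Σ_{k ≥ 2} d/dy_k`. -/
theorem ZO_mono_mem (j : Fin n) (i : Fin N) (I : Idx N n) :
    ZO j i (mono I) ∈ (Vs (deg I - 1) : Submodule ℝ (W N n)) := by
  obtain ⟨L, hL, e⟩ := upow_Dt (I.2 j) i
  -- the terms of the Leibniz expansion of `d/dx^i` applied to the inner product
  let T : Fin n → W N n := fun k f =>
    dpow (I.1 0) (Dt i (fac I k (f k)) * ∏ l ∈ Finset.univ.erase k, fac I l (f l))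
  have hTne : ∀ k, k ≠ 0 → T k ∈ (Vs (deg I - 1) : Submodule ℝ (W N n)) := by
    intro k hk
    have : T k = mono (incD I k i) := by
      funext f
      have h0 : (incD I k i).1 0 = I.1 0 := by simp [incD, Ne.symm hk]
      rw [mono, h0, pm_eq, ← Finset.mul_prod_erase _ _ (Finset.mem_univ k)]
      change dpow _ _ = _
      congr 2
      · simp only [fac, hk, if_false, incD, Function.update_self]
        rw [dpow_add_single']
        rfl
      · refine Finset.prod_congr rfl fun l hl => ?_
        simp [fac, incD, Function.update_of_ne (Finset.ne_of_mem_erase hl)]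
    rw [this]
    exact Vs_mono (Nat.sub_le _ _) (mono_mem (incD I k i))
  have hT : T j ∈ (Vs (deg I - 1) : Submodule ℝ (W N n)) := by
    by_cases hj : j = 0
    · subst hj
      have : T 0 = mono (setK I (I.1 0 + Pi.single i 1)) - ∑ k ∈ Finset.univ.erase 0, T k := by
        rw [eq_sub_iff_add_eq, Finset.add_sum_erase _ _ (Finset.mem_univ 0)]
        funext f
        rw [mono_setK, dpow_add_single, Module.End.mul_apply, DtE_apply, pm_eq, Dt_prod, map_sum,
          Finset.sum_apply]
      rw [this]
      exact sub_mem (Vs_mono (Nat.sub_le _ _) (mono_mem (setK I _)))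
        (sum_mem fun k hk => hTne k (Finset.ne_of_mem_erase hk))
    · exact hTne j hj
  have hfac : ∀ g, fac I j (Dt i g) = Dt i (fac I j g) +
      (L.map fun β => fac (setU I j β) j g).sum := by
    intro g
    by_cases hj : j = 0
    · simp only [fac, hj, if_true, setU, Function.update_self]
      rw [← hj, e]
    · simp only [fac, hj, if_false, setU, Function.update_self]
      rw [e, map_add, dpow_Dt, map_list_sum, List.map_map]
      rfl
  have hsum : ZO j i (mono I) = T j + (L.map fun β => mono (setU I j β)).sum := by
    funext f
    have hmono : ∀ β, mono (setU I j β) f = dpow (I.1 0)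
        (fac (setU I j β) j (f j) * ∏ l ∈ Finset.univ.erase j, fac I l (f l)) := by
      intro β
      rw [mono, pm_eq, ← Finset.mul_prod_erase _ _ (Finset.mem_univ j)]
      change dpow (I.1 0) _ = _
      congr 2
      refine Finset.prod_congr rfl fun l hl => ?_
      simp [fac, setU, Function.update_of_ne (Finset.ne_of_mem_erase hl)]
    have hs : (L.map fun β => mono (setU I j β)).sum f =
        (L.map fun β => mono (setU I j β) f).sum := by
      have := map_list_sum (Pi.evalAddMonoidHom (fun _ => Loc N) f)
        (L.map fun β => mono (setU I j β))
      rw [List.map_map] at this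
      exact this
    rw [Pi.add_apply, hs, ZO_apply, mono, pm_update, hfac, add_mul, map_add]
    congr 1
    simp only [hmono]
    rw [← List.sum_map_mul_right, map_list_sum, List.map_map]
    rfl
  rw [hsum]
  refine add_mem hT (list_sum_mem ?_)
  intro A hA
  obtain ⟨β, hβ, rfl⟩ := List.mem_map.1 hA
  refine Vs_mono ?_ (mono_mem (setU I j β))
  have h1 := hL β hβ
  have h2 : deg I = degf (I.2 j) + ∑ k ∈ Finset.univ.erase j, degf (I.2 k) :=
    (Finset.add_sum_erase _ _ (Finset.mem_univ j)).symm
  have h3 : deg (setU I j β) = degf β + ∑ k ∈ Finset.univ.erase j, degf (I.2 k) := by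
    unfold deg
    rw [← Finset.add_sum_erase _ _ (Finset.mem_univ j)]
    congr 1
    · simp [setU]
    · exact Finset.sum_congr rfl fun k hk => by
        simp [setU, Function.update_of_ne (Finset.ne_of_mem_erase hk)]
  omega

theorem ZO_mem (j : Fin n) (i : Fin N) {A : W N n} (hA : A ∈ Vs 0) : ZO j i A ∈ Vs 0 := by
  obtain ⟨c, h1, h2, rfl⟩ := hA
  exact ext_mem h1 1 (fun I => c I • ZO j i (mono I)) (fun I => Vs_locSmul _ (ZO_mono_mem j i I))
    (fun I hI => by simp [hI]) 0 (fun _ _ => Nat.zero_le _)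

end

section

/-! ### Division by total derivatives and integration by parts -/

variable {N n : ℕ} [NeZero n]

theorem Bd.update_xc {m : ℕ} {f : Fin n → Loc N} (hf : Bd m f) (i : Fin N) :
    Bd m (Function.update f 0 (xc i * f 0)) := by
  intro j J hJ
  by_cases h : j = 0
  · subst h
    simp [Derivation.leibniz, hf 0 J hJ, dvU_xc]
  · rw [Function.update_of_ne h]
    exact hf j J hJ

/-- The operators on which the commutator `YO i` is pointwise nilpotent. -/
def NV (i : Fin N) : Submodule ℝ (W N n) where
  carrier := {A | ∀ f, ∃ l₀, ∀ l ≥ l₀, (YO i ^ l) A f = 0}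
  add_mem' {A B} hA hB f := by
    obtain ⟨a, ha⟩ := hA f
    obtain ⟨b, hb⟩ := hB f
    refine ⟨max a b, fun l hl => ?_⟩
    rw [map_add, Pi.add_apply, ha l (le_of_max_le_left hl), hb l (le_of_max_le_right hl), add_zero]
  zero_mem' f := ⟨0, fun l _ => by simp⟩
  smul_mem' r A hA f := by
    obtain ⟨a, ha⟩ := hA f
    exact ⟨a, fun l hl => by rw [map_smul, Pi.smul_apply, ha l hl, smul_zero]⟩

theorem YO_pow_succ (i : Fin N) (l : ℕ) (A : W N n) :
    (YO i ^ (l + 1)) A = YO i ((YO i ^ l) A) := by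
  rw [pow_succ']; rfl

theorem YO_mem_NV {i : Fin N} (l : Fin N) {A : W N n} (hA : A ∈ NV i) : YO l A ∈ NV i := by
  intro f
  obtain ⟨a, ha⟩ := hA f
  obtain ⟨b, hb⟩ := hA (Function.update f 0 (xc l * f 0))
  refine ⟨max a b, fun k hk => ?_⟩
  have hc : ∀ k, (YO i ^ k) (YO l A) = YO l ((YO i ^ k) A) := by
    intro k
    induction k with
    | zero => rfl
    | succ k ih => rw [YO_pow_succ, ih, YO_comm, YO_pow_succ]
  rw [hc, YO_apply, ha k (le_of_max_le_left hk), hb k (le_of_max_le_right hk), mul_zero, sub_zero]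

theorem YO_pow_XO (i : Fin N) (k : ℕ) (A : W N n) :
    (YO i ^ (k + 1)) (XO i A) = XO i ((YO i ^ (k + 1)) A) + ((k : ℝ) + 1) • (YO i ^ k) A := by
  induction k with
  | zero => simp [YO_XO]
  | succ k ih =>
    rw [YO_pow_succ, ih, map_add, map_smul, YO_XO, if_pos rfl, ← YO_pow_succ, ← YO_pow_succ,
      add_assoc]
    congr 1
    push_cast
    rw [add_smul ((k : ℝ) + 1), one_smul, add_comm]

theorem YO_pow_XO_of_ne {i l : Fin N} (h : i ≠ l) (k : ℕ) (A : W N n) :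
    (YO i ^ k) (XO l A) = XO l ((YO i ^ k) A) := by
  induction k with
  | zero => rfl
  | succ k ih => rw [YO_pow_succ, ih, YO_XO_of_ne h, ← YO_pow_succ]

theorem YO_pow_mono (i : Fin N) (I : Idx N n) (K : MI N) :
    ∃ l₀, ∀ l ≥ l₀, (YO i ^ l) (mono (setK I K)) = 0 := by
  induction K using mi_induction with
  | h0 =>
    refine ⟨1, fun l hl => ?_⟩
    obtain ⟨l, rfl⟩ := Nat.exists_eq_add_of_le' hl
    rw [pow_succ, Module.End.mul_apply, YO_mono_zero, map_zero]
  | h1 l K ih =>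
    obtain ⟨l₀, h⟩ := ih
    refine ⟨l₀ + 1, fun k hk => ?_⟩
    obtain ⟨k, rfl⟩ := Nat.exists_eq_add_of_le' (show 1 ≤ k by omega)
    rw [mono_setK_succ]
    by_cases hil : i = l
    · subst hil
      rw [YO_pow_XO, h _ (by omega), h _ (by omega)]
      simp
    · rw [YO_pow_XO_of_ne hil, h _ (by omega), map_zero]

theorem YO_pow_mono_eq_zero (i : Fin N) (I : Idx N n) {m : ℕ} (h : n * m < deg I) (l : ℕ) :
    ∀ f, Bd m f → (YO i ^ l) (mono I) f = 0 := by
  induction l with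
  | zero => exact fun f hf => mono_eq_zero hf I h
  | succ l ih =>
    intro f hf
    rw [YO_pow_succ, YO_apply, ih f hf, ih _ (hf.update_xc i)]
    simp

theorem YO_pow_real (i : Fin N) {c : Idx N n → Loc N} (hc : GoodL c) (l : ℕ) :
    ∀ f, (YO i ^ l) (real c) f = ∑ᶠ I, c I * (YO i ^ l) (mono I) f := by
  have hfin : ∀ l f, (Function.support fun I => c I * (YO i ^ l) (mono I) f).Finite := by
    intro l f
    obtain ⟨m, hm⟩ := exists_Bd f
    refine (hc (n * m)).subset fun I hI => ⟨fun h => hI (by simp [h]), ?_⟩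
    by_contra! h
    exact hI (by simp [YO_pow_mono_eq_zero i I h l f hm])
  induction l with
  | zero => exact fun f => rfl
  | succ l ih =>
    intro f
    rw [YO_pow_succ, YO_apply, ih, ih, mul_finsum' _ _ (hfin l f), ← finsum_sub_distrib (hfin l _)]
    · refine finsum_congr fun I => ?_
      rw [YO_pow_succ, YO_apply]
      ring
    · refine (hfin l f).subset fun I hI h => hI ?_
      simp only at h
      simp [h]

/-- Pointwise nilpotence holds since only finitely many terms act nontrivially on a given tuple. -/
theorem Vs_le_NV (i : Fin N) {d : ℕ} {A : W N n} (hA : A ∈ Vs d) : A ∈ NV i := by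
  obtain ⟨c, h1, h2, rfl⟩ := hA
  intro f
  obtain ⟨m, hm⟩ := exists_Bd f
  have hn : ∀ I : Idx N n, ∃ l₀, ∀ l ≥ l₀, (YO i ^ l) (mono I) = 0 := fun I => by
    simpa using YO_pow_mono i I (I.1 0)
  choose l₀ hl₀ using hn
  refine ⟨(h1 (n * m)).toFinset.sup l₀, fun l hl => ?_⟩
  rw [YO_pow_real i h1]
  refine finsum_eq_zero_of_forall_eq_zero fun I => ?_
  by_cases hI : c I = 0
  · simp [hI]
  by_cases hd : deg I ≤ n * m
  · rw [hl₀ I l ((Finset.le_sup (by simp [hI, hd])).trans hl)]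
    simp
  · rw [YO_pow_mono_eq_zero i I (not_le.1 hd) l f hm, mul_zero]

/-- Uniqueness of division by `d/dx^i`: a multiple of `d/dx^i` annihilated by `YO i` vanishes. -/
theorem div_unique {i : Fin N} {b r : W N n} (hb : b ∈ NV i) (h : XO i b + r = 0)
    (hr : YO i r = 0) : b = 0 := by
  have key : ∀ k : ℕ, XO i ((YO i ^ (k + 1)) b) + ((k : ℝ) + 1) • (YO i ^ k) b = 0 := by
    intro k
    have := congrArg (YO i ^ (k + 1)) h
    rwa [map_add, map_zero, pow_succ (YO i) k, Module.End.mul_apply _ _ r, hr, map_zero, add_zero,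
      ← pow_succ, YO_pow_XO] at this
  funext f
  obtain ⟨l₀, hl₀⟩ := hb f
  -- descending induction from `l₀`: `key` recovers `(YO i)^l b` from `(YO i)^(l+1) b`
  have down : ∀ t l, l₀ ≤ l + t → (YO i ^ l) b f = 0 := by
    intro t
    induction t with
    | zero => exact fun l hl => hl₀ l hl
    | succ t ih =>
      intro l hl
      have h1 := congrFun (key l) f
      rw [Pi.add_apply, XO_apply, ih (l + 1) (by omega), map_zero, zero_add, Pi.smul_apply,
        Pi.zero_apply] at h1
      exact (smul_eq_zero.1 h1).resolve_left (by positivity)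
  exact down l₀ 0 (by omega)

theorem smul_mono_succ (I : Idx N n) (K : MI N) (i : Fin N) (a : Loc N) :
    a • mono (setK I (K + Pi.single i 1)) =
      XO i (a • mono (setK I K)) - Dt i a • mono (setK I K) := by
  rw [XO_smul, mono_setK_succ]
  abel

theorem div_mono (i : Fin N) (I : Idx N n) (K : MI N) : ∀ a : Loc N,
    ∃ b ∈ (Vs (deg I) : Submodule ℝ (W N n)), ∃ r ∈ (Vs (deg I) : Submodule ℝ (W N n)),
      a • mono (setK I K) = XO i b + r ∧ YO i r = 0 := by
  induction K using mi_induction with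
  | h0 =>
    intro a
    exact ⟨0, zero_mem _, _, smul_mono_mem a (setK I 0), by simp, by
      rw [YO_smul, YO_mono_zero, smul_zero]⟩
  | h1 l K ih =>
    intro a
    obtain ⟨b', hb', r', hr', e', z'⟩ := ih (Dt l a)
    by_cases h : i = l
    · subst h
      refine ⟨a • mono (setK I K) - b', sub_mem (smul_mono_mem a (setK I K)) hb', -r',
        neg_mem hr', ?_, by rw [map_neg, z', neg_zero]⟩
      rw [smul_mono_succ, e', map_sub]
      abel
    · obtain ⟨b, hb, r, hr, e, z⟩ := ih a
      refine ⟨XO l b - b', sub_mem (XO_mem l hb) hb', XO l r - r', sub_mem (XO_mem l hr) hr', ?_,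
        by rw [map_sub, z', YO_XO_of_ne h, z, map_zero, sub_zero]⟩
      rw [smul_mono_succ, e', e, map_sub, map_add, XO_comm l i]
      abel

/-- Division with remainder by `d/dx^i`. -/
theorem div_exists (i : Fin N) {A : W N n} (hA : A ∈ Vs 0) :
    ∃ b ∈ (Vs 0 : Submodule ℝ (W N n)), ∃ r ∈ (Vs 0 : Submodule ℝ (W N n)),
      A = XO i b + r ∧ YO i r = 0 := by
  obtain ⟨c, hc, -, rfl⟩ := hA
  have : ∀ I : Idx N n, ∃ b r : W N n, b ∈ Vs (deg I - 0) ∧ r ∈ Vs (deg I - 0) ∧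
      c I • mono I = XO i b + r ∧ YO i r = 0 ∧ (c I = 0 → b = 0) ∧ (c I = 0 → r = 0) := by
    intro I
    by_cases h : c I = 0
    · exact ⟨0, 0, zero_mem _, zero_mem _, by simp [h], by simp, fun _ => rfl, fun _ => rfl⟩
    · obtain ⟨b, hb, r, hr, e, z⟩ := div_mono i I (I.1 0) (c I)
      rw [setK_self] at e
      exact ⟨b, r, hb, hr, e, z, fun h' => (h h').elim, fun h' => (h h').elim⟩
  choose b r hb hr e z b0 r0 using this
  have fb := ext_finite hc 0 b hb b0
  have fr := ext_finite hc 0 r hr r0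
  refine ⟨_, ext_mem hc 0 b hb b0 0 fun _ _ => Nat.zero_le _, _,
    ext_mem hc 0 r hr r0 0 fun _ _ => Nat.zero_le _, ?_, ?_⟩
  · funext f
    rw [Pi.add_apply, XO_apply]
    have h1 : Dt i (∑ᶠ I, b I f) = ∑ᶠ I, Dt i (b I f) :=
      (Dt i).toLinearMap.toAddMonoidHom.map_finsum (fb f)
    have h2 : (Function.support fun I => Dt i (b I f)).Finite :=
      (fb f).subset fun I hI h => hI (by simp only at h; simp [h])
    rw [h1, ← finsum_add_distrib h2 (fr f)]
    exact finsum_congr fun I => congrFun (e I) f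
  · funext f
    rw [YO_apply, mul_finsum' _ _ (fr f), ← finsum_sub_distrib (fr _)]
    · exact finsum_eq_zero_of_forall_eq_zero fun I => congrFun (z I) f
    · exact (fr f).subset fun I hI h => hI (by simp only at h; simp [h])

/-- A sum of multiples of total derivatives which commutes with multiplication of the first
argument by the coordinates vanishes. -/
theorem sum_XO_eq_zero (S : Finset (Fin N)) : ∀ (b : Fin N → W N n) (R : W N n),
    (∀ i, b i ∈ Vs 0) → ∑ i ∈ S, XO i (b i) = R → (∀ i, YO i R = 0) → R = 0 := by
  induction S using Finset.induction_on with
  | empty => exact fun b R _ h _ => by simpa using h.symm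
  | insert i S hi ih =>
    intro b R hb h hR
    choose q hq r hr e z using fun l => div_exists i (hb l)
    have hne : ∀ l ∈ S, i ≠ l := fun l hl h => hi (h ▸ hl)
    have h1 : XO i (b i + ∑ l ∈ S, XO l (q l)) + (∑ l ∈ S, XO l (r l) - R) = 0 := by
      rw [← h, Finset.sum_insert hi, map_add, map_sum]
      have : ∑ l ∈ S, XO l (b l) = ∑ l ∈ S, XO i (XO l (q l)) + ∑ l ∈ S, XO l (r l) := by
        rw [← Finset.sum_add_distrib]
        refine Finset.sum_congr rfl fun l _ => ?_
        conv_lhs => rw [e l]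
        rw [map_add, XO_comm]
      rw [this]
      abel
    have h2 := div_unique (Vs_le_NV i (d := 0) (add_mem (hb i) (sum_mem fun l _ =>
      XO_mem l (hq l)))) h1 (by
        rw [map_sub, hR, map_sum, sub_zero]
        exact Finset.sum_eq_zero fun l hl => by rw [YO_XO_of_ne (hne l hl), z, map_zero])
    rw [h2, map_zero, zero_add, sub_eq_zero] at h1
    exact ih r R hr h1 hR

/-- Integration by parts for a single term. -/
theorem ibp_mono (I : Idx N n) (K : MI N) : ∀ a : Loc N, ∃ b : Fin N → W N n,
    (∀ i, b i ∈ Vs (deg I)) ∧ a • mono (setK I K) =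
      ∑ i, XO i (b i) + ((-1 : ℝ) ^ (∑ i, K i) • dpow K a) • mono (setK I 0) := by
  induction K using mi_induction with
  | h0 => exact fun a => ⟨0, fun _ => zero_mem _, by simp [dpow_zero]⟩
  | h1 l K ih =>
    intro a
    obtain ⟨b, hb, e⟩ := ih (Dt l a)
    refine ⟨Pi.single l (a • mono (setK I K)) - b, fun i => sub_mem ?_ (hb i), ?_⟩
    · by_cases h : i = l
      · subst h
        rw [Pi.single_eq_same]
        exact smul_mono_mem a (setK I K)
      · rw [Pi.single_eq_of_ne h]
        exact zero_mem _
    · have h1 : ∑ i, XO i ((Pi.single l (a • mono (setK I K)) - b : Fin N → W N n) i) =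
          XO l (a • mono (setK I K)) - ∑ i, XO i (b i) := by
        simp only [Pi.sub_apply, map_sub, Finset.sum_sub_distrib]
        rw [Finset.sum_eq_single l (fun i _ h => by rw [Pi.single_eq_of_ne h, map_zero]) (by simp),
          Pi.single_eq_same]
      have h2 : ∑ i, (K + Pi.single l 1 : MI N) i = ∑ i, K i + 1 := by
        simp [Finset.sum_add_distrib]
      rw [smul_mono_succ, e, h1, h2, dpow_add_single, pow_succ, Module.End.mul_apply, DtE_apply,
        mul_neg_one, neg_smul]
      generalize (-1 : ℝ) ^ (∑ i, K i) • dpow K (Dt l a) = x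
      funext f
      simp only [Pi.sub_apply, Pi.add_apply, Pi.smul_apply, smul_eq_mul]
      ring

/-- The characteristic on polarized coefficients in the algebra of local functions. -/
noncomputable def chiL (c : Idx N n → Loc N) : Idx N n → Loc N := fun I =>
  if I.1 0 = 0 then ∑ᶠ K : MI N, (-1 : ℝ) ^ (∑ i, K i) • dpow K (c (setK I K)) else 0

/-- The contribution of the coefficient with index `t` to the characteristic. -/
noncomputable def chiC (c : Idx N n → Loc N) (t : Idx N n) : Loc N :=
  (-1 : ℝ) ^ (∑ i, t.1 0 i) • dpow (t.1 0) (c t)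

theorem real_single (I : Idx N n) (a : Loc N) : real (Pi.single I a) = a • mono I := by
  funext f
  rw [real, finsum_eq_single _ I]
  · simp
  · intro K hK
    simp [hK]

theorem chiL_eq (c : Idx N n → Loc N) (I : Idx N n) :
    chiL c I = ∑ᶠ t, (Pi.single (setK t 0) (chiC c t) : Idx N n → Loc N) I := by
  have hinj : Function.Injective fun K : MI N => setK I K := by
    intro K K' h
    have := congrFun (congrArg Prod.fst h) 0
    simpa [setK] using this
  by_cases hI : I.1 0 = 0
  · have hs : ∀ K, setK (setK I K) 0 = I := fun K => by
      simp only [setK, Function.update_idem]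
      rw [← hI, Function.update_eq_self]
    rw [chiL, if_pos hI]
    have h1 : ∀ K, (-1 : ℝ) ^ (∑ i, K i) • dpow K (c (setK I K)) =
        (Pi.single (setK (setK I K) 0) (chiC c (setK I K)) : Idx N n → Loc N) I := by
      intro K
      rw [hs, Pi.single_eq_same, chiC]
      simp [setK]
    rw [finsum_congr h1, ← finsum_mem_range (f := fun t =>
      (Pi.single (setK t 0) (chiC c t) : Idx N n → Loc N) I) hinj]
    refine finsum_congr fun t => ?_
    by_cases ht : t ∈ Set.range fun K => setK I K
    · simp [ht]
    · simp only [ht]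
      rw [finsum_false, Pi.single_eq_of_ne]
      intro h
      exact ht ⟨t.1 0, by simp only [h]; simp [setK]⟩
  · rw [chiL, if_neg hI, finsum_eq_zero_of_forall_eq_zero]
    intro t
    rw [Pi.single_eq_of_ne]
    intro h
    exact hI (by rw [h]; simp [setK])

/-- Integration by parts: a local differential operator is congruent to its characteristic
modulo total derivatives, and the characteristic commutes with multiplication of the first
argument by the coordinates. -/
theorem ibp {c : Idx N n → Loc N} (hc : GoodL c) :
    GoodL (chiL c) ∧ (∀ i, YO i (real (chiL c)) = 0) ∧ ∃ b : Fin N → W N n, (∀ i, b i ∈ Vs 0) ∧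
      real c = ∑ i, XO i (b i) + real (chiL c) := by
  classical
  have hz : ∀ t, c t = 0 → chiC c t = 0 := fun t h => by simp [chiC, h]
  have hne : ∀ (t I : Idx N n), (Pi.single (setK t 0) (chiC c t) : Idx N n → Loc N) I ≠ 0 →
      I = setK t 0 := by
    intro t I h
    by_contra h'
    exact h (Pi.single_eq_of_ne h' _)
  have hs := real_sum (fun t => (Pi.single (setK t 0) (chiC c t) : Idx N n → Loc N)) deg
    (fun t m => (Set.finite_singleton (setK t 0)).subset fun I hI => hne t I hI.1)
    (fun t I hI => by rw [hne t I hI, deg_setK])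
    (fun m => (hc m).subset fun t ht => ⟨fun h => ht.1 (by simp [hz t h]), ht.2⟩)
  have hchi : (fun I => ∑ᶠ t, (Pi.single (setK t 0) (chiC c t) : Idx N n → Loc N) I) = chiL c :=
    funext fun I => (chiL_eq c I).symm
  rw [hchi] at hs
  have hr : ∀ f, real (chiL c) f = ∑ᶠ t, (chiC c t • mono (setK t 0)) f := fun f => by
    rw [hs.2]
    exact finsum_congr fun t => by rw [real_single]
  have hrm : ∀ t : Idx N n, chiC c t • mono (setK t 0) ∈ (Vs (deg t - 0) : Submodule ℝ (W N n)) :=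
    fun t => smul_mono_mem _ (setK t 0)
  have fr := ext_finite hc 0 _ hrm (fun t h => by rw [hz t h, zero_smul])
  refine ⟨hs.1, fun i => ?_, ?_⟩
  · funext f
    rw [YO_apply, hr, hr, mul_finsum' _ _ (fr f), ← finsum_sub_distrib (fr _)]
    · refine finsum_eq_zero_of_forall_eq_zero fun t => ?_
      have := congrFun (YO_smul i (chiC c t) (mono (setK t 0))) f
      rw [YO_mono_zero, smul_zero] at this
      exact this
    · exact (fr f).subset fun I hI h => hI (by simp only at h; simp [h])
  have : ∀ I : Idx N n, ∃ b : Fin N → W N n, (∀ i, b i ∈ Vs (deg I - 0)) ∧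
      c I • mono I = ∑ i, XO i (b i) + chiC c I • mono (setK I 0) ∧ (c I = 0 → b = 0) := by
    intro I
    by_cases h : c I = 0
    · exact ⟨0, fun _ => zero_mem _, by simp [h, hz], fun _ => rfl⟩
    · obtain ⟨b, hb, e⟩ := ibp_mono I (I.1 0) (c I)
      rw [setK_self] at e
      exact ⟨b, hb, e, fun h' => (h h').elim⟩
  choose b hb e b0 using this
  have b0' : ∀ i I, c I = 0 → b I i = 0 := fun i I h => by rw [b0 I h]; rfl
  have fb := fun i => ext_finite hc 0 (fun I => b I i) (fun I => hb I i) (b0' i)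
  refine ⟨fun i f => ∑ᶠ I, b I i f,
    fun i => ext_mem hc 0 (fun I => b I i) (fun I => hb I i) (b0' i) 0 fun _ _ => Nat.zero_le _, ?_⟩
  funext f
  have h1 : ∀ i, Dt i (∑ᶠ I, b I i f) = ∑ᶠ I, Dt i (b I i f) := fun i =>
    (Dt i).toLinearMap.toAddMonoidHom.map_finsum (fb i f)
  have h2 : ∀ i, (Function.support fun I => Dt i (b I i f)).Finite := fun i =>
    (fb i f).subset fun I hI h => hI (by simp only at h; simp [h])
  have h3 : (Function.support fun I => ∑ i, Dt i (b I i f)).Finite :=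
    (Set.finite_iUnion h2).subset fun I hI => by
      obtain ⟨i, -, hi⟩ := Finset.exists_ne_zero_of_sum_ne_zero hI
      exact Set.mem_iUnion.2 ⟨i, hi⟩
  rw [Pi.add_apply, Finset.sum_apply, hr]
  simp only [XO_apply, h1]
  rw [← finsum_sum_comm _ _ fun i _ => h2 i, ← finsum_add_distrib h3 (fr f)]
  refine finsum_congr fun I => ?_
  have := congrFun (e I) f
  rw [Pi.add_apply, Finset.sum_apply] at this
  exact this

end

section

/-! ### The Koszul complex of operators and its acyclicity -/

theorem sum_antisymm_eq_zero {C M : Type*} [Fintype C] [AddCommGroup M] [Module ℝ M]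
    (T : C → C → M) (h : ∀ c c', T c c' = -T c' c) : ∑ c, ∑ c', T c c' = 0 := by
  have h1 : ∑ c, ∑ c', T c c' = -∑ c, ∑ c', T c c' := by
    conv_rhs => rw [Finset.sum_comm]
    simp only [← Finset.sum_neg_distrib]
    exact Finset.sum_congr rfl fun c _ => Finset.sum_congr rfl fun c' _ => h c c'
  have h2 : (2 : ℝ) • ∑ c, ∑ c', T c c' = 0 := by
    rw [two_smul]
    nth_rewrite 1 [h1]
    simp
  exact (smul_eq_zero.1 h2).resolve_left two_ne_zero

theorem neg_one_pow_smul_smul {M : Type*} [AddCommGroup M] [Module ℝ M] (k : ℕ) (x : M) :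
    ((-1 : ℝ) ^ k) • ((-1 : ℝ) ^ k) • x = x := by
  rw [smul_smul, ← mul_pow]
  simp

theorem smul_eq_neg_smul {M : Type*} [AddCommGroup M] [Module ℝ M] {a b : ℝ} (h : a = -b) (x : M) :
    a • x = -(b • x) := by
  rw [h, neg_smul]

theorem pos_update_true {N : ℕ} {i l : Fin N} {ε : Fin N → Bool} (h : ε i = false) :
    pos l (Function.update ε i true) = pos l ε + if i < l then 1 else 0 := by
  unfold pos
  have h1 : ∀ k, (if k < l ∧ Function.update ε i true k = true then 1 else 0) =
      (if k < l ∧ ε k = true then 1 else 0) + if i = k then (if i < l then 1 else 0) else 0 := by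
    intro k
    by_cases hk : i = k
    · subst hk; simp [h]
    · simp [Function.update_of_ne (Ne.symm hk), hk]
  rw [Finset.sum_congr rfl fun k _ => h1 k, Finset.sum_add_distrib, Finset.sum_ite_eq]
  simp

theorem pos_update_self {N : ℕ} (i : Fin N) (ε : Fin N → Bool) (b : Bool) :
    pos i (Function.update ε i b) = pos i ε := by
  unfold pos
  refine Finset.sum_congr rfl fun k _ => ?_
  by_cases hk : k = i
  · subst hk; simp
  · rw [Function.update_of_ne hk]

theorem pos_update_false {N : ℕ} {i l : Fin N} {ε : Fin N → Bool} (h : ε i = true) :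
    pos l ε = pos l (Function.update ε i false) + if i < l then 1 else 0 := by
  rw [← pos_update_true (by simp), Function.update_idem, ← h, Function.update_eq_self]

theorem wt_update_true {N : ℕ} {i : Fin N} {ε : Fin N → Bool} (h : ε i = false) :
    wt (Function.update ε i true) = wt ε + 1 := by
  unfold wt
  rw [← Finset.add_sum_erase _ _ (Finset.mem_univ i),
    ← Finset.add_sum_erase (a := i) _ (fun i => if ε i = true then 1 else 0) (Finset.mem_univ i)]
  have : ∀ k ∈ Finset.univ.erase i, (if Function.update ε i true k = true then 1 else 0) =
      if ε k = true then 1 else 0 := fun k hk => by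
    rw [Function.update_of_ne (Finset.ne_of_mem_erase hk)]
  rw [Finset.sum_congr rfl this]
  simp [h]
  omega

theorem wt_update_false {N : ℕ} {i : Fin N} {ε : Fin N → Bool} (h : ε i = true) :
    wt ε = wt (Function.update ε i false) + 1 := by
  rw [← wt_update_true (i := i) (by simp), Function.update_idem, ← h, Function.update_eq_self]

theorem wt_le {N : ℕ} (ε : Fin N → Bool) : wt ε ≤ N := by
  refine (Finset.sum_le_card_nsmul _ _ 1 fun i _ => ?_).trans (by simp)
  split <;> simp

theorem wt_top {N : ℕ} : wt (fun _ : Fin N => true) = N := by simp [wt]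

theorem eq_top_of_wt {N : ℕ} {ε : Fin N → Bool} (h : wt ε = N) : ε = fun _ => true := by
  funext i
  by_contra hi
  have := wt_update_true (i := i) (ε := ε) (by simpa using hi)
  have := wt_le (Function.update ε i true)
  omega

variable {N n : ℕ}

/-- Horizontal forms with coefficients in the operators. -/
abbrev WForm (N n : ℕ) := (Fin N → Bool) → W N n

/-- The horizontal differential acting on operator-valued forms by postcomposition. -/
noncomputable def dK (ω : WForm N n) : WForm N n := fun δ =>
  ∑ i, if δ i = true then (-1 : ℝ) ^ pos i δ • XO i (ω (Function.update δ i false)) else 0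

theorem dK_add (ω η : WForm N n) : dK (ω + η) = dK ω + dK η := by
  funext δ
  simp only [dK, Pi.add_apply, ← Finset.sum_add_distrib]
  refine Finset.sum_congr rfl fun i _ => ?_
  split
  · rw [map_add, smul_add]
  · simp

theorem dK_sub (ω η : WForm N n) : dK (ω - η) = dK ω - dK η := by
  funext δ
  simp only [dK, Pi.sub_apply, ← Finset.sum_sub_distrib]
  refine Finset.sum_congr rfl fun i _ => ?_
  split
  · rw [map_sub, smul_sub]
  · simp

@[simp] theorem dK_zero : dK (0 : WForm N n) = 0 := by
  have := dK_sub (0 : WForm N n) 0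
  simpa using this

theorem dK_dK (ω : WForm N n) : dK (dK ω) = 0 := by
  funext δ
  have h : dK (dK ω) δ = ∑ i, ∑ l, if δ i = true ∧ δ l = true ∧ l ≠ i then
      ((-1 : ℝ) ^ pos i δ * (-1 : ℝ) ^ pos l (Function.update δ i false)) •
        XO i (XO l (ω (Function.update (Function.update δ i false) l false))) else 0 := by
    conv_lhs => unfold dK
    refine Finset.sum_congr rfl fun i _ => ?_
    by_cases hi : δ i = true
    · rw [if_pos hi, map_sum, Finset.smul_sum]
      refine Finset.sum_congr rfl fun l _ => ?_
      by_cases hl : l = i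
      · subst hl; simp
      · rw [Function.update_of_ne hl]
        by_cases h : δ l = true
        · simp only [hi, h, hl, if_true, true_and, ne_eq, not_false_iff, map_smul, smul_smul]
        · simp [h]
    · simp [hi]
  rw [h]
  refine sum_antisymm_eq_zero _ fun i l => ?_
  by_cases hc : δ i = true ∧ δ l = true ∧ l ≠ i
  · obtain ⟨hi, hl, hne⟩ := hc
    rw [if_pos ⟨hi, hl, hne⟩, if_pos ⟨hl, hi, hne.symm⟩, XO_comm i l,
      Function.update_comm hne]
    refine smul_eq_neg_smul (M := W N n) ?_ _
    have h1 := pos_update_false (l := l) hi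
    have h2 := pos_update_false (l := i) hl
    rw [h1, h2]
    rcases lt_or_gt_of_ne hne with h | h
    · rw [if_neg h.not_gt, if_pos h]; ring
    · rw [if_neg h.not_gt, if_pos h]; ring
  · rw [if_neg hc, if_neg fun h => hc ⟨h.2.1, h.1, h.2.2.symm⟩, neg_zero]

theorem dK_mem {ω : WForm N n} [NeZero n] (h : ∀ δ, ω δ ∈ Vs 0) (δ) : dK ω δ ∈ Vs 0 := by
  refine sum_mem fun i _ => ?_
  split
  · exact Submodule.smul_mem _ _ (XO_mem i (h _))
  · exact zero_mem _

variable [NeZero n]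

/-- The inductive step for the acyclicity of the Koszul complex: up to exact forms, a closed form
can be made divisible by `dx^i` with coefficients annihilated by `YO i`, without losing these
properties for the other indices. -/
theorem koszul_step (i : Fin N) (ω : WForm N n) (hω : ∀ δ, ω δ ∈ Vs 0) (hcl : dK ω = 0) :
    ∃ η : WForm N n, (∀ δ, η δ ∈ Vs 0) ∧
      (∀ ε, (ε i = false → (ω - dK η) ε = 0) ∧ YO i ((ω - dK η) ε) = 0) ∧
      ∀ l, l ≠ i → (∀ ε, (ε l = false → ω ε = 0) ∧ YO l (ω ε) = 0) →
        ∀ ε, (ε l = false → (ω - dK η) ε = 0) ∧ YO l ((ω - dK η) ε) = 0 := by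
  choose b hb r hr e z using fun ε => div_exists i (hω ε)
  -- contract the quotients with `∂/∂x^i`, so that `ω - dη` keeps only the remainders when `ε i`
  let η : WForm N n := fun δ =>
    if δ i = false then (-1 : ℝ) ^ pos i δ • b (Function.update δ i true) else 0
  have hη : ∀ δ, η δ ∈ Vs 0 := fun δ => by
    by_cases h : δ i = false
    · simp only [η, h, if_true]
      exact Submodule.smul_mem _ _ (hb _)
    · simp only [η, h]
      exact zero_mem _
  have hω' : ∀ δ, (ω - dK η) δ ∈ Vs 0 := fun δ => sub_mem (hω δ) (dK_mem hη δ)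
  have ht : ∀ ε, ε i = true → (ω - dK η) ε = r ε := by
    intro ε hε
    have : dK η ε = XO i (b ε) := by
      unfold dK
      rw [Finset.sum_eq_single i]
      · have h1 : Function.update ε i true = ε := by rw [← hε, Function.update_eq_self]
        simp only [hε, if_true, η, Function.update_self, Function.update_idem, pos_update_self, h1,
          map_smul]
        exact neg_one_pow_smul_smul (M := W N n) _ _
      · intro l _ hl
        simp [η, Function.update_of_ne (Ne.symm hl), hε]
      · simp
    rw [Pi.sub_apply, this, e ε]
    abel
  -- closedness in the direction `dx^i`: all other terms are annihilated by `YO i`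
  have hf : ∀ ε, ε i = false → (ω - dK η) ε = 0 := by
    intro ε hε
    have hcl' : dK (ω - dK η) = 0 := by rw [dK_sub, dK_dK, hcl, sub_zero]
    have h1 := congrFun hcl' (Function.update ε i true)
    unfold dK at h1
    rw [← Finset.add_sum_erase _ _ (Finset.mem_univ i)] at h1
    simp only [Function.update_self, if_true, Function.update_idem] at h1
    rw [show Function.update ε i false = ε by rw [← hε, Function.update_eq_self],
      ← map_smul] at h1
    have h2 := div_unique (Submodule.smul_mem _ _ (Vs_le_NV i (hω' ε))) h1 (by
      rw [map_sum]
      refine Finset.sum_eq_zero fun l hl => ?_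
      have hne := Finset.ne_of_mem_erase hl
      split
      · change YO i (_ • XO l ((ω - dK η) _)) = 0
        rw [ht _ (by rw [Function.update_of_ne hne.symm, Function.update_self]), map_smul,
          YO_XO_of_ne hne.symm, z, map_zero, smul_zero]
      · exact map_zero _)
    exact (smul_eq_zero.1 h2).resolve_left (by simp)
  refine ⟨η, hη, fun ε => ⟨hf ε, ?_⟩, fun l hl hZ ε => ?_⟩
  · by_cases hε : ε i = true
    · rw [ht ε hε, z]
    · rw [hf ε (by simpa using hε), map_zero]
  · by_cases hε : ε i = true
    · rw [ht ε hε]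
      refine ⟨fun h => ?_, ?_⟩
      · have h1 := e ε
        rw [(hZ ε).1 h] at h1
        have h2 := div_unique (Vs_le_NV i (hb ε)) h1.symm (z ε)
        rwa [h2, map_zero, zero_add, eq_comm] at h1
      · have h1 := congrArg (YO l) (e ε)
        rw [(hZ ε).2, map_add, YO_XO_of_ne hl] at h1
        have h2 := div_unique (YO_mem_NV l (Vs_le_NV i (hb ε))) h1.symm (by
          rw [YO_comm, z, map_zero])
        rwa [h2, map_zero, zero_add, eq_comm] at h1
    · rw [hf ε (by simpa using hε)]
      exact ⟨fun _ => rfl, map_zero _⟩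

/-- Induction on the set `S` of directions in which the closed form `ω` has not yet been made
divisible by `dx^i`. -/
theorem koszul_acyclic_aux (S : Finset (Fin N)) : ∀ ω : WForm N n, (∀ δ, ω δ ∈ Vs 0) → dK ω = 0 →
    (∀ l, l ∉ S → ∀ ε, (ε l = false → ω ε = 0) ∧ YO l (ω ε) = 0) →
    ∃ η : WForm N n, (∀ δ, η δ ∈ Vs 0) ∧ ∀ δ, (∃ i, δ i = false) → ω δ = dK η δ := by
  induction S using Finset.induction_on with
  | empty =>
    intro ω _ _ h
    refine ⟨0, fun _ => zero_mem _, fun δ ⟨i, hi⟩ => ?_⟩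
    rw [dK_zero, (h i (Finset.notMem_empty _) δ).1 hi]
    rfl
  | insert i S _ ih =>
    intro ω hω hcl h
    obtain ⟨η, hη, h1, h2⟩ := koszul_step i ω hω hcl
    obtain ⟨η', hη', h3⟩ := ih (ω - dK η) (fun δ => sub_mem (hω δ) (dK_mem hη δ))
      (by rw [dK_sub, dK_dK, hcl, sub_zero]) (fun l hl => by
        by_cases hli : l = i
        · exact hli ▸ h1
        · exact h2 l hli (h l (by simp [hli, hl])))
    refine ⟨η + η', fun δ => add_mem (hη δ) (hη' δ), fun δ hδ => ?_⟩
    rw [dK_add, Pi.add_apply, ← h3 δ hδ, Pi.sub_apply]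
    abel

/-- The homology of the complex of operator-valued forms vanishes below the top form degree. -/
theorem koszul_acyclic {s : ℕ} (hs : 1 ≤ s) (ω : WForm N n) (hω : ∀ δ, ω δ ∈ Vs 0)
    (hcl : dK ω = 0) (hg : ∀ δ, ω δ ≠ 0 → wt δ + s = N) :
    ∃ η : WForm N n, (∀ δ, η δ ∈ Vs 0) ∧ (∀ δ, η δ ≠ 0 → wt δ + (s + 1) = N) ∧ ω = dK η := by
  obtain ⟨η, hη, h⟩ := koszul_acyclic_aux Finset.univ ω hω hcl (by simp)
  refine ⟨fun δ => if wt δ + (s + 1) = N then η δ else 0, fun δ => ?_, fun δ hδ => ?_, ?_⟩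
  · beta_reduce
    split
    · exact hη δ
    · exact zero_mem _
  · by_contra h'
    exact hδ (if_neg h')
  · funext δ
    by_cases hδ : wt δ + s = N
    · rw [h δ]
      · unfold dK
        refine Finset.sum_congr rfl fun i _ => ?_
        by_cases hi : δ i = true
        · have := wt_update_false hi
          beta_reduce
          rw [if_pos (show wt (Function.update δ i false) + (s + 1) = N by omega)]
        · simp [hi]
      · by_contra! h'
        have : δ = fun _ => true := funext fun i => by simpa using h' i
        rw [this, wt_top] at hδ
        omega
    · have h0 : ω δ = 0 := by
        by_contra h'
        exact hδ (hg δ h')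
      rw [h0]
      unfold dK
      refine (Finset.sum_eq_zero fun i _ => ?_).symm
      by_cases hi : δ i = true
      · have := wt_update_false hi
        beta_reduce
        rw [if_neg (show ¬ wt (Function.update δ i false) + (s + 1) = N by omega)]
        simp
      · simp [hi]

/-- A form concentrated in top degree is exact as soon as its coefficient is a sum of multiples of
total derivatives. -/
theorem koszul_top (ω : WForm N n) (hg : ∀ δ, ω δ ≠ 0 → wt δ + 0 = N) (b : Fin N → W N n)
    (hb : ∀ i, b i ∈ Vs 0) (h : ω (fun _ => true) = ∑ i, XO i (b i)) :
    ∃ η : WForm N n, (∀ δ, η δ ∈ Vs 0) ∧ (∀ δ, η δ ≠ 0 → wt δ + (0 + 1) = N) ∧ ω = dK η := by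
  let tp : Fin N → Bool := fun _ => true
  let η : WForm N n := fun δ =>
    ∑ l, if δ = Function.update tp l false then (-1 : ℝ) ^ pos l tp • b l else 0
  have hgr : ∀ δ, η δ ≠ 0 → wt δ + (0 + 1) = N := by
    intro δ hδ
    obtain ⟨l, -, hl⟩ := Finset.exists_ne_zero_of_sum_ne_zero hδ
    have h1 : δ = Function.update tp l false := by
      by_contra h'
      exact hl (if_neg h')
    have := wt_update_false (i := l) (ε := tp) rfl
    rw [h1, zero_add, ← this, wt_top]
  refine ⟨η, fun δ => sum_mem fun l _ => ?_, hgr, ?_⟩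
  · split
    · exact Submodule.smul_mem _ _ (hb l)
    · exact zero_mem _
  · funext δ
    by_cases hδ : wt δ = N
    · rw [eq_top_of_wt hδ, h]
      unfold dK
      refine Finset.sum_congr rfl fun i _ => ?_
      have : η (Function.update tp i false) = (-1 : ℝ) ^ pos i tp • b i := by
        simp only [η]
        rw [Finset.sum_eq_single i]
        · simp
        · intro l _ hl
          rw [if_neg]
          intro h'
          have := congrFun h' i
          rw [Function.update_self, Function.update_of_ne hl.symm] at this
          exact absurd this (by simp [tp])
        · simp
      rw [if_pos rfl]
      change _ = _ • XO i (η (Function.update tp i false))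
      rw [this, map_smul]
      exact (neg_one_pow_smul_smul (M := W N n) _ _).symm
    · have h0 : ω δ = 0 := by
        by_contra h'
        exact hδ (hg δ h')
      rw [h0]
      unfold dK
      refine (Finset.sum_eq_zero fun i _ => ?_).symm
      by_cases hi : δ i = true
      · have h1 := wt_update_false hi
        have : η (Function.update δ i false) = 0 := by
          by_contra h'
          have := hgr _ h'
          omega
        rw [this]
        simp
      · simp [hi]

end

section

/-! ### The input differential and the construction of lifts -/

variable {N n : ℕ}

/-- Multidegrees of the `n` inputs. -/
abbrev MD (N n : ℕ) := Fin n → (Fin N → Bool)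

/-- Set the `i`-th entry of the `j`-th multidegree. -/
def raise (p : Fin n × Fin N) (εs : MD N n) : MD N n :=
  Function.update εs p.1 (Function.update (εs p.1) p.2 true)

/-- The Koszul sign exponent of the `i`-th component of `d_H` acting on the `j`-th input. -/
def sE (p : Fin n × Fin N) (εs : MD N n) : ℕ :=
  (∑ l ∈ Finset.univ.filter fun l => l < p.1, wt (εs l)) + pos p.2 (εs p.1)

/-- The total form degree of the inputs. -/
def tw (εs : MD N n) : ℕ := ∑ j, wt (εs j)

theorem sum_wt_raise (S : Finset (Fin n)) {p : Fin n × Fin N} {εs : MD N n}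
    (h : εs p.1 p.2 = false) :
    ∑ l ∈ S, wt (raise p εs l) = ∑ l ∈ S, wt (εs l) + if p.1 ∈ S then 1 else 0 := by
  have h1 : ∀ l, wt (raise p εs l) = wt (εs l) + if p.1 = l then 1 else 0 := by
    intro l
    by_cases hl : p.1 = l
    · subst hl
      simp [raise, wt_update_true h]
    · simp [raise, Function.update_of_ne (Ne.symm hl), hl]
  rw [Finset.sum_congr rfl fun l _ => h1 l, Finset.sum_add_distrib, Finset.sum_ite_eq]

theorem tw_raise {p : Fin n × Fin N} {εs : MD N n} (h : εs p.1 p.2 = false) :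
    tw (raise p εs) = tw εs + 1 := by
  unfold tw
  rw [sum_wt_raise _ h]
  simp

theorem tw_top : tw (fun _ _ => true : MD N n) = n * N := by
  simp [tw, wt_top]

theorem eq_top_of_tw {εs : MD N n} (h : tw εs = n * N) : εs = fun _ _ => true := by
  have h1 := (Finset.sum_eq_sum_iff_of_le (s := Finset.univ) (f := fun j => wt (εs j))
    (g := fun _ => N) fun j _ => wt_le _).1 (by simpa [tw] using h)
  exact funext fun j => eq_top_of_wt (h1 j (Finset.mem_univ j))

theorem tw_le (εs : MD N n) : tw εs ≤ n * N :=
  (Finset.sum_le_card_nsmul _ _ N fun j _ => wt_le (εs j)).trans (by simp)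

theorem raise_apply_of_ne {p q : Fin n × Fin N} (h : p ≠ q) (εs : MD N n) :
    raise p εs q.1 q.2 = εs q.1 q.2 := by
  unfold raise
  by_cases h1 : q.1 = p.1
  · rw [h1, Function.update_self, Function.update_of_ne]
    intro h2
    exact h (Prod.ext h1.symm h2.symm)
  · rw [Function.update_of_ne h1]

theorem raise_apply_self (p : Fin n × Fin N) (εs : MD N n) : raise p εs p.1 p.2 = true := by
  simp [raise]

theorem raise_comm {p q : Fin n × Fin N} (h : p ≠ q) (εs : MD N n) :
    raise p (raise q εs) = raise q (raise p εs) := by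
  unfold raise
  by_cases h1 : p.1 = q.1
  · have h2 : p.2 ≠ q.2 := fun h2 => h (Prod.ext h1 h2)
    rw [h1]
    simp [Function.update_comm h2]
  · rw [Function.update_of_ne h1, Function.update_of_ne (Ne.symm h1), Function.update_comm h1]

theorem sE_raise {p q : Fin n × Fin N} {εs : MD N n} (h : εs p.1 p.2 = false) :
    sE q (raise p εs) = sE q εs + if p.1 < q.1 ∨ (p.1 = q.1 ∧ p.2 < q.2) then 1 else 0 := by
  unfold sE
  rw [sum_wt_raise _ h]
  by_cases h1 : p.1 = q.1
  · have h2 : raise p εs q.1 = Function.update (εs q.1) p.2 true := by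
      unfold raise
      rw [h1, Function.update_self]
    rw [h2, pos_update_true (h1 ▸ h)]
    simp [h1]
    ring
  · have h2 : raise p εs q.1 = εs q.1 := by
      unfold raise
      rw [Function.update_of_ne (Ne.symm h1)]
    rw [h2]
    simp [h1]
    ring

/-- Matrices of operators, indexed by the multidegrees of the inputs and of the output. -/
abbrev WMat (N n : ℕ) := MD N n → WForm N n

/-- Precomposition with the horizontal differential of the `n`-fold tensor product. -/
noncomputable def RK (f : WMat N n) : WMat N n := fun εs δ =>
  ∑ p : Fin n × Fin N, if εs p.1 p.2 = false then
    (-1 : ℝ) ^ sE p εs • ZO p.1 p.2 (f (raise p εs) δ) else 0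

theorem RK_add (f g : WMat N n) : RK (f + g) = RK f + RK g := by
  funext εs δ
  simp only [RK, Pi.add_apply, ← Finset.sum_add_distrib]
  refine Finset.sum_congr rfl fun i _ => ?_
  split
  · rw [map_add, smul_add]
  · simp

theorem RK_congr {f g : WMat N n} {εs : MD N n}
    (h : ∀ p : Fin n × Fin N, εs p.1 p.2 = false → f (raise p εs) = g (raise p εs)) :
    RK f εs = RK g εs := by
  funext δ
  refine Finset.sum_congr rfl fun p _ => ?_
  split
  · rw [h p ‹_›]
  · rfl

theorem RK_eq_zero {f : WMat N n} {εs : MD N n}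
    (h : ∀ p : Fin n × Fin N, εs p.1 p.2 = false → f (raise p εs) = 0) : RK f εs = 0 := by
  funext δ
  refine Finset.sum_eq_zero fun p _ => ?_
  split
  · rw [h p ‹_›, Pi.zero_apply, map_zero, smul_zero]
  · rfl

theorem RK_RK (f : WMat N n) : RK (RK f) = 0 := by
  funext εs δ
  have h : RK (RK f) εs δ = ∑ p : Fin n × Fin N, ∑ q : Fin n × Fin N,
      if εs p.1 p.2 = false ∧ εs q.1 q.2 = false ∧ q ≠ p then
        ((-1 : ℝ) ^ sE p εs * (-1 : ℝ) ^ sE q (raise p εs)) •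
          ZO p.1 p.2 (ZO q.1 q.2 (f (raise q (raise p εs)) δ)) else 0 := by
    conv_lhs => unfold RK
    refine Finset.sum_congr rfl fun p _ => ?_
    by_cases hp : εs p.1 p.2 = false
    · rw [if_pos hp, map_sum, Finset.smul_sum]
      refine Finset.sum_congr rfl fun q _ => ?_
      by_cases hq : q = p
      · subst hq; simp [raise_apply_self]
      · rw [raise_apply_of_ne (Ne.symm hq)]
        by_cases h : εs q.1 q.2 = false
        · simp only [hp, h, hq, if_true, true_and, ne_eq, not_false_iff, map_smul, smul_smul]
        · simp [h]
    · simp [hp]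
  rw [h]
  refine sum_antisymm_eq_zero _ fun p q => ?_
  by_cases hc : εs p.1 p.2 = false ∧ εs q.1 q.2 = false ∧ q ≠ p
  · obtain ⟨hp, hq, hne⟩ := hc
    rw [if_pos ⟨hp, hq, hne⟩, if_pos ⟨hq, hp, hne.symm⟩, ZO_comm, raise_comm hne]
    refine smul_eq_neg_smul (M := W N n) ?_ _
    rw [sE_raise hp, sE_raise hq]
    rcases lt_trichotomy p.1 q.1 with h1 | h1 | h1
    · rw [if_pos (Or.inl h1), if_neg (by omega)]; ring
    · have h2 : p.2 ≠ q.2 := fun h2 => hne (Prod.ext h1.symm h2.symm)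
      rcases lt_or_gt_of_ne h2 with h3 | h3
      · rw [if_pos (Or.inr ⟨h1, h3⟩), if_neg (by omega)]; ring
      · rw [if_neg (by omega), if_pos (Or.inr ⟨h1.symm, h3⟩)]; ring
    · rw [if_neg (by omega), if_pos (Or.inl h1)]; ring
  · rw [if_neg hc, if_neg fun h => hc ⟨h.2.1, h.1, h.2.2.symm⟩, neg_zero]

theorem dK_RK (f : WMat N n) (εs : MD N n) : dK (RK f εs) = RK (fun ε => dK (f ε)) εs := by
  funext δ
  have h1 : dK (RK f εs) δ = ∑ i, ∑ p : Fin n × Fin N,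
      if δ i = true ∧ εs p.1 p.2 = false then ((-1 : ℝ) ^ pos i δ * (-1 : ℝ) ^ sE p εs) •
        XO i (ZO p.1 p.2 (f (raise p εs) (Function.update δ i false))) else 0 := by
    unfold dK
    refine Finset.sum_congr rfl fun i _ => ?_
    by_cases hi : δ i = true
    · rw [if_pos hi, RK, map_sum, Finset.smul_sum]
      refine Finset.sum_congr rfl fun p _ => ?_
      by_cases hp : εs p.1 p.2 = false
      · simp only [hi, hp, if_true, true_and, map_smul, smul_smul]
      · simp [hp]
    · simp [hi]
  have h2 : RK (fun ε => dK (f ε)) εs δ = ∑ p : Fin n × Fin N, ∑ i,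
      if δ i = true ∧ εs p.1 p.2 = false then ((-1 : ℝ) ^ pos i δ * (-1 : ℝ) ^ sE p εs) •
        XO i (ZO p.1 p.2 (f (raise p εs) (Function.update δ i false))) else 0 := by
    unfold RK
    refine Finset.sum_congr rfl fun p _ => ?_
    by_cases hp : εs p.1 p.2 = false
    · rw [if_pos hp]
      simp only [dK]
      rw [map_sum, Finset.smul_sum]
      refine Finset.sum_congr rfl fun i _ => ?_
      by_cases hi : δ i = true
      · simp only [hi, hp, if_true, and_self, map_smul, smul_smul, XO_ZO]
        rw [mul_comm]
      · simp [hi]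
    · simp [hp]
  rw [h1, h2, Finset.sum_comm]

/-- The form of top degree with coefficient `A`. -/
noncomputable def topForm (A : W N n) : WForm N n := fun δ => if wt δ = N then A else 0

theorem dK_topForm (A : W N n) : dK (topForm A) = 0 := by
  funext δ
  refine Finset.sum_eq_zero fun i _ => ?_
  split
  · have h1 := wt_update_false (i := i) (ε := δ) ‹_›
    have h2 := wt_le δ
    rw [topForm, if_neg (by omega), map_zero, smul_zero]
  · rfl

variable [NeZero n]

theorem RK_mem {f : WMat N n} (h : ∀ εs δ, f εs δ ∈ Vs 0) (εs δ) : RK f εs δ ∈ Vs 0 := by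
  refine sum_mem fun p _ => ?_
  split
  · exact Submodule.smul_mem _ _ (ZO_mem _ _ (h _ _))
  · exact zero_mem _

/-- `f` is a matrix of local differential operators of degree `0`. -/
structure GrMat (f : WMat N n) : Prop where
  mem : ∀ εs δ, f εs δ ∈ Vs 0
  gr : ∀ εs δ, f εs δ ≠ 0 → wt δ + n * N = N + tw εs

theorem RK_gr {f : WMat N n} (hf : GrMat f) {εs : MD N n} {δ} (h : RK f εs δ ≠ 0) :
    wt δ + n * N = N + (tw εs + 1) := by
  obtain ⟨p, -, hp⟩ := Finset.exists_ne_zero_of_sum_ne_zero h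
  by_cases h1 : εs p.1 p.2 = false
  · rw [← tw_raise h1]
    refine hf.gr _ _ fun h0 => hp ?_
    rw [h0, map_zero, smul_zero, ite_self]
  · exact (hp (if_neg h1)).elim

/-- Construction of a lift in form degrees at most `s`, by induction on `s`. -/
theorem lift_aux (A : W N n) (hA : A ∈ Vs 0)
    (H : ∀ j i, ∃ b : Fin N → W N n, (∀ l, b l ∈ Vs 0) ∧ ZO j i A = ∑ l, XO l (b l)) (s : ℕ) :
    ∃ f : WMat N n, GrMat f ∧ f (fun _ _ => true) (fun _ => true) = A ∧
      ∀ εs, n * N ≤ tw εs + s → dK (f εs) = RK f εs := by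
  induction s with
  | zero =>
    refine ⟨fun εs => if tw εs = n * N then topForm A else 0, ⟨fun εs δ => ?_, fun εs δ h => ?_⟩,
      ?_, fun εs h => ?_⟩
    · split
      · unfold topForm
        split
        · exact hA
        · exact zero_mem _
      · exact zero_mem _
    · by_cases h1 : tw εs = n * N
      · by_cases h2 : wt δ = N
        · rw [h1, h2]
        · exact (h (by simp [h1, topForm, h2])).elim
      · exact (h (by simp [h1])).elim
    · simp [tw_top, topForm, wt_top]
    · have h1 : tw εs = n * N := le_antisymm (tw_le _) h
      beta_reduce
      rw [if_pos h1, dK_topForm, RK_eq_zero]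
      intro p hp
      rw [eq_top_of_tw h1] at hp
      exact absurd hp (by simp)
  | succ s ih =>
    obtain ⟨f, hf, hfA, hd⟩ := ih
    have key : ∀ εs : MD N n, tw εs + (s + 1) = n * N → ∃ η : WForm N n, (∀ δ, η δ ∈ Vs 0) ∧
        (∀ δ, η δ ≠ 0 → wt δ + (s + 1) = N) ∧ RK f εs = dK η := by
      intro εs hεs
      have hg : ∀ δ, RK f εs δ ≠ 0 → wt δ + s = N := fun δ hδ => by
        have := RK_gr hf hδ
        omega
      -- the first step uses the hypothesis on `A`, the later ones use acyclicity
      rcases Nat.eq_zero_or_pos s with rfl | hs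
      · choose b hb e using H
        refine koszul_top _ hg (fun l => ∑ p : Fin n × Fin N, if εs p.1 p.2 = false then
          (-1 : ℝ) ^ sE p εs • b p.1 p.2 l else 0) (fun l => sum_mem fun p _ => ?_) ?_
        · split
          · exact Submodule.smul_mem _ _ (hb _ _ _)
          · exact zero_mem _
        · simp only [map_sum]
          rw [Finset.sum_comm]
          refine Finset.sum_congr rfl fun p _ => ?_
          by_cases hp : εs p.1 p.2 = false
          · have h1 : raise p εs = fun _ _ => true := eq_top_of_tw (by rw [tw_raise hp]; omega)
            simp only [hp, if_true, map_smul]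
            rw [h1, hfA, e, Finset.smul_sum]
          · simp [hp]
      · refine koszul_acyclic hs _ (fun δ => RK_mem hf.mem _ _) ?_ hg
        rw [dK_RK, RK_congr (g := RK f), RK_RK]
        · rfl
        · intro p hp
          exact hd _ (by rw [tw_raise hp]; omega)
    choose η hη hηg hηd using key
    have hR : ∀ εs : MD N n, n * N ≤ tw εs + (s + 1) →
        RK (fun εs => if h : tw εs + (s + 1) = n * N then η εs h else f εs) εs = RK f εs := by
      intro εs h
      refine RK_congr fun p hp => ?_
      rw [dif_neg]
      rw [tw_raise hp]
      omega
    refine ⟨fun εs => if h : tw εs + (s + 1) = n * N then η εs h else f εs,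
      ⟨fun εs δ => ?_, fun εs δ => ?_⟩, ?_, fun εs h => ?_⟩
    · by_cases h : tw εs + (s + 1) = n * N
      · simp only [h, dif_pos]
        exact hη _ _ _
      · simp only [h, dif_neg, not_false_iff]
        exact hf.mem _ _
    · by_cases h : tw εs + (s + 1) = n * N
      · simp only [h, dif_pos]
        intro h0
        have := hηg _ _ _ h0
        omega
      · simp only [h, dif_neg, not_false_iff]
        exact hf.gr _ _
    · beta_reduce
      rw [dif_neg (by rw [tw_top]; omega), hfA]
    · rw [hR εs h]
      by_cases h1 : tw εs + (s + 1) = n * N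
      · simp only [h1, dif_pos]
        exact (hηd _ _).symm
      · simp only [h1, dif_neg, not_false_iff]
        exact hd _ (by omega)

/-- Existence of lifts when all the `A ∘ d/dx^i_j` are sums of total derivatives. -/
theorem lift_exists (A : W N n) (hA : A ∈ Vs 0)
    (H : ∀ j i, ∃ b : Fin N → W N n, (∀ l, b l ∈ Vs 0) ∧ ZO j i A = ∑ l, XO l (b l)) :
    ∃ f : WMat N n, GrMat f ∧ f (fun _ _ => true) (fun _ => true) = A ∧
      ∀ εs, dK (f εs) = RK f εs := by
  obtain ⟨f, h1, h2, h3⟩ := lift_aux A hA H (n * N)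
  exact ⟨f, h1, h2, fun εs => h3 εs (by omega)⟩

/-- If `A` itself is a sum of total derivatives, a lift is provided by the boundary of a degree `1`
element concentrated in top input degree. -/
theorem lift_short (A : W N n) (b : Fin N → W N n) (hb : ∀ l, b l ∈ Vs 0)
    (H : A = ∑ l, XO l (b l)) :
    ∃ f : WMat N n, GrMat f ∧ f (fun _ _ => true) (fun _ => true) = A ∧
      (∀ εs, dK (f εs) = RK f εs) ∧ ∀ εs, tw εs + 2 ≤ n * N → f εs = 0 := by
  have htop : topForm A (fun _ => true) = A := if_pos wt_top
  obtain ⟨B, hB, hBg, hBd⟩ := koszul_top (topForm A) (fun δ h => by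
    by_contra h'
    exact h (if_neg h')) b hb (by rw [htop, H])
  -- the lift is the boundary of `g`, so the cycle equation is automatic
  let g : WMat N n := fun εs => if tw εs = n * N then B else 0
  have hg0 : ∀ εs, tw εs ≠ n * N → g εs = 0 := fun εs h => if_neg h
  have hg1 : ∀ εs, tw εs = n * N → g εs = B := fun εs h => if_pos h
  have hgm : ∀ εs δ, g εs δ ∈ Vs 0 := fun εs δ => by
    by_cases h : tw εs = n * N
    · rw [hg1 _ h]; exact hB δ
    · rw [hg0 _ h]; exact zero_mem _
  have hR0 : ∀ εs, tw εs + 1 ≠ n * N → RK g εs = 0 := fun εs h =>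
    RK_eq_zero fun p hp => hg0 _ (by rwa [tw_raise hp])
  refine ⟨(fun εs => dK (g εs)) + RK g, ⟨fun εs δ => add_mem (dK_mem (hgm εs) δ) (RK_mem hgm εs δ),
    fun εs δ h => ?_⟩, ?_, fun εs => ?_, fun εs h => ?_⟩
  · by_cases h1 : tw εs = n * N
    · rw [Pi.add_apply, hR0 εs (by omega), add_zero, hg1 _ h1, ← hBd] at h
      by_cases h2 : wt δ = N
      · omega
      · exact (h (if_neg h2)).elim
    · rw [Pi.add_apply, hg0 _ h1, dK_zero, zero_add] at h
      obtain ⟨p, -, hp⟩ := Finset.exists_ne_zero_of_sum_ne_zero h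
      by_cases h2 : εs p.1 p.2 = false
      · by_cases h3 : tw (raise p εs) = n * N
        · have h4 : B δ ≠ 0 := fun h0 => hp (by
            rw [hg1 _ h3, h0, map_zero, smul_zero, ite_self])
          have h5 := hBg _ h4
          rw [tw_raise h2] at h3
          omega
        · exact (hp (by rw [hg0 _ h3, Pi.zero_apply, map_zero, smul_zero, ite_self])).elim
      · exact (hp (if_neg h2)).elim
  · rw [Pi.add_apply, hR0 _ (by rw [tw_top]; omega), add_zero, hg1 _ tw_top, ← hBd, htop]
  · rw [Pi.add_apply, dK_add, dK_dK, zero_add, RK_add, RK_RK, add_zero, dK_RK]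
  · rw [Pi.add_apply, hR0 _ (by omega), hg0 _ (by omega), dK_zero, add_zero]

end

section

/-! ### Comparison of operators on functions and on the algebra of local functions -/

variable {N n : ℕ}

/-- The tuple of functions underlying a tuple of local functions. -/
def lf (f : Fin n → Loc N) : Fin n → Fn N := fun j => (f j : Fn N)

theorem lf_local (f : Fin n → Loc N) : LocalTuple (lf f) := fun j => mem_Loc.1 (f j).2

theorem exists_lf {g : Fin n → Fn N} (hg : LocalTuple g) : ∃ f : Fin n → Loc N, g = lf f :=
  ⟨fun j => ⟨g j, mem_Loc.2 (hg j)⟩, rfl⟩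

theorem lf_update (f : Fin n → Loc N) (j : Fin n) (a : Loc N) :
    lf (Function.update f j a) = Function.update (lf f) j (a : Fn N) := by
  funext k
  by_cases h : k = j
  · subst h; simp [lf]
  · simp [lf, Function.update_of_ne h]

/-- `A` restricts to the operator `B` on local functions. -/
def Rel (A : Op N n) (B : W N n) : Prop := ∀ f, A (lf f) = (B f : Fn N)

/-- Evaluation at a point of the jet bundle. -/
noncomputable def ev (pt : JetPt N) : Loc N →+ ℝ where
  toFun a := (a : Fn N) pt
  map_zero' := rfl
  map_add' _ _ := rfl

/-- The extension of an operator by zero to tuples of functions which are not local. -/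
noncomputable def toOp (B : W N n) : Op N n := by
  classical
  exact fun g => if h : LocalTuple g then (B fun j => ⟨g j, mem_Loc.2 (h j)⟩ : Fn N) else 0

theorem toOp_rel (B : W N n) : Rel (toOp B) B := fun f => dif_pos (lf_local f)

theorem toOp_zero : toOp (0 : W N n) = 0 := by
  funext g
  unfold toOp
  split <;> rfl

theorem Rel.eq {A : Op N n} {B B' : W N n} (h : Rel A B) (h' : Rel A B') : B = B' :=
  funext fun f => Subtype.ext ((h f).symm.trans (h' f))

theorem Rel.precompD {A : Op N n} {B : W N n} (h : Rel A B) (i : Fin N) (j : Fin n) :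
    Rel (precompD A i j) (ZO j i B) := fun f => by
  rw [ZO_apply, ← h, lf_update, coe_Dt]
  rfl

/-- The differential of `DEnd_0(n)` in terms of operators on local functions. -/
theorem delta_coe {F : DMat N n} {f : WMat N n} (h : ∀ εs δ, Rel (F εs δ) (f εs δ))
    (εs : MD N n) (δ : Fin N → Bool) (g : Fin n → Loc N) (pt : JetPt N) :
    deltaMat 0 F εs δ (lf g) pt = ((dK (f εs) δ - RK f εs δ) g : Fn N) pt := by
  have h1 : (dK (f εs) δ g : Fn N) pt = ∑ i : Fin N, if δ i = true then (-1 : ℝ) ^ pos i δ *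
      Dtot i (F εs (Function.update δ i false) (lf g)) pt else 0 := by
    rw [dK, Finset.sum_apply]
    refine (map_sum (ev pt) _ _).trans (Finset.sum_congr rfl fun i _ => ?_)
    split
    · rw [h, ← coe_Dt]
      rfl
    · rfl
  have h2 : (RK f εs δ g : Fn N) pt = ∑ j : Fin n, ∑ i : Fin N, if εs j i = false then
      (-1 : ℝ) ^ ((∑ l ∈ Finset.univ.filter fun l => l < j, wt (εs l)) + pos i (εs j)) *
        F (Function.update εs j (Function.update (εs j) i true)) δ
          (Function.update (lf g) j (Dtot i (lf g j))) pt else 0 := by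
    rw [RK, Finset.sum_apply, ← Fintype.sum_prod_type']
    refine (map_sum (ev pt) _ _).trans (Finset.sum_congr rfl fun p _ => ?_)
    split
    · have := Rel.precompD (h (raise p εs) δ) p.2 p.1 g
      have h3 := congrFun this pt
      change _ = _ * precompD (F (raise p εs) δ) p.2 p.1 (lf g) pt
      rw [h3]
      rfl
    · rfl
  have h3 : ((dK (f εs) δ - RK f εs δ) g : Fn N) pt =
      (dK (f εs) δ g : Fn N) pt - (RK f εs δ g : Fn N) pt := rfl
  rw [h3, h1, h2, deltaMat]
  simp only [zpow_zero, one_smul, Pi.sub_apply]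

theorem delta_zero_iff {F : DMat N n} {f : WMat N n} (h : ∀ εs δ, Rel (F εs δ) (f εs δ)) :
    MatZeroLoc (deltaMat 0 F) ↔ ∀ εs, dK (f εs) = RK f εs := by
  refine ⟨fun hz εs => ?_, fun hd εs δ g hg pt => ?_⟩
  · funext δ
    rw [← sub_eq_zero]
    funext g
    refine Subtype.ext (funext fun pt => ?_)
    rw [← delta_coe h, hz _ _ _ (lf_local g)]
    rfl
  · obtain ⟨g, rfl⟩ := exists_lf hg
    rw [delta_coe h, hd, sub_self]
    rfl

theorem graded_toOp {f : WMat N n}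
    (h : ∀ εs δ, f εs δ ≠ 0 → wt δ + n * N = N + tw εs) :
    GradedMat 0 fun εs δ => toOp (f εs δ) := by
  intro εs δ hne
  have h1 := h εs δ fun h0 => hne (by beta_reduce; rw [h0, toOp_zero])
  unfold tw at h1
  rw [Finset.sum_sub_distrib]
  simp only [Finset.sum_const, Finset.card_univ, Fintype.card_fin, nsmul_eq_mul]
  zify at h1
  linarith

theorem good_coe {c : Idx N n → Loc N} (hc : GoodL c) : Good fun I => (c I : Fn N) :=
  ⟨fun I => mem_Loc.1 (c I).2, fun m => (hc m).subset fun I hI =>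
    ⟨fun h => hI.1 (by simp only [h]; rfl), hI.2⟩⟩

theorem exists_coe {q : OpData N n} (hq : Good q) :
    ∃ c : Idx N n → Loc N, GoodL c ∧ q = fun I => (c I : Fn N) :=
  ⟨fun I => ⟨q I, mem_Loc.2 (hq.1 I)⟩, fun m => (hq.2 m).subset fun _ hI =>
    ⟨fun h => hI.1 (Subtype.ext h), hI.2⟩, rfl⟩

variable [NeZero n]

theorem coe_pm (I : Idx N n) (f : Fin n → Loc N) : (pm I f : Fn N) = fun p => ∏ j,
    if j = (0 : Fin n) then UPow (I.2 j) (lf f j) p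
      else DPow (I.1 j) (UPow (I.2 j) (lf f j)) p := by
  funext p
  have h : (pm I f : Fn N) = ∏ j, ((if j = (0 : Fin n) then upow (I.2 j) (f j)
      else dpow (I.1 j) (upow (I.2 j) (f j)) : Loc N) : Fn N) :=
    map_prod (Loc N).val _ _
  rw [h, Finset.prod_apply]
  refine Finset.prod_congr rfl fun j _ => ?_
  split
  · rw [coe_upow]; rfl
  · rw [coe_dpow, coe_upow]; rfl

/-- Realization of coefficients over the algebra of local functions agrees with the realization
of the underlying functions. -/
theorem coe_real {c : Idx N n → Loc N} (hc : GoodL c) (f : Fin n → Loc N) (pt : JetPt N) :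
    (real c f : Fn N) pt = realizeP (fun I => (c I : Fn N)) (lf f) pt := by
  have h1 : (real c f : Fn N) pt = ∑ᶠ I, ev pt (c I * mono I f) :=
    (ev pt).map_finsum (real_finite hc f)
  have h2 : ∀ I, ev pt (c I * mono I f) = (c I : Fn N) pt *
      DPow (I.1 0) (fun p => ∏ j, if j = (0 : Fin n) then UPow (I.2 j) (lf f j) p
        else DPow (I.1 j) (UPow (I.2 j) (lf f j)) p) pt := fun I => by
    rw [← coe_pm, ← coe_dpow]
    rfl
  have h3 : (Function.support fun I => ev pt (c I * mono I f)).Finite :=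
    (real_finite hc f).subset fun I hI h => hI (by simp only [h, map_zero])
  rw [h1, realizeP, ← tsum_eq_finsum (L := SummationFilter.unconditional _) h3]
  exact tsum_congr h2

theorem presents_iff {A : Op N n} {c : Idx N n → Loc N} (hc : GoodL c) :
    Presents (fun I => (c I : Fn N)) A ↔ Rel A (real c) := by
  refine ⟨fun h f => funext fun pt => ?_, fun h g hg pt => ?_⟩
  · rw [coe_real hc, h _ (lf_local f)]
  · obtain ⟨f, rfl⟩ := exists_lf hg
    rw [h, coe_real hc]

theorem pldo_exists {A : Op N n} (h : IsPLDO A) : ∃ B ∈ (Vs 0 : Submodule ℝ (W N n)), Rel A B := by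
  obtain ⟨q, hq, hp⟩ := h
  obtain ⟨c, hc, rfl⟩ := exists_coe hq
  exact ⟨real c, ⟨c, hc, fun _ _ => Nat.zero_le _, rfl⟩, (presents_iff hc).1 hp⟩

theorem toOp_pldo {B : W N n} (h : B ∈ Vs 0) : IsPLDO (toOp B) := by
  obtain ⟨c, hc, -, rfl⟩ := h
  exact ⟨_, good_coe hc, (presents_iff hc).2 (toOp_rel _)⟩

theorem coe_chiL {c : Idx N n → Loc N} (hc : GoodL c) :
    chiData (fun I => (c I : Fn N)) = fun I => (chiL c I : Fn N) := by
  funext I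
  unfold chiData chiL
  by_cases hI : I.1 0 = 0
  · rw [if_pos hI, if_pos hI]
    funext pt
    have hinj : Function.Injective fun K : MI N => setK I K := by
      intro K K' h
      have := congrFun (congrArg Prod.fst h) 0
      simpa [setK] using this
    have hfin : {K : MI N | c (setK I K) ≠ 0}.Finite :=
      ((hc (deg I)).preimage hinj.injOn).subset fun K hK => ⟨hK, by simp⟩
    have h1 : (Function.support fun K : MI N =>
        (-1 : ℝ) ^ (∑ i, K i) • dpow K (c (setK I K))).Finite :=
      hfin.subset fun K hK h => hK (by simp [h])
    have h2 : ((∑ᶠ K : MI N, (-1 : ℝ) ^ (∑ i, K i) • dpow K (c (setK I K)) : Loc N) : Fn N) pt =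
        ∑ᶠ K : MI N, ev pt ((-1 : ℝ) ^ (∑ i, K i) • dpow K (c (setK I K))) :=
      (ev pt).map_finsum h1
    have h4 : (Function.support fun K : MI N =>
        ev pt ((-1 : ℝ) ^ (∑ i, K i) • dpow K (c (setK I K)))).Finite :=
      h1.subset fun K hK h => hK (by simp only [h, map_zero])
    rw [h2, ← tsum_eq_finsum (L := SummationFilter.unconditional _) h4]
    refine tsum_congr fun K => ?_
    have h3 := congrFun (coe_dpow K (c (setK I K))) pt
    change _ * DPow K (c (setK I K) : Fn N) pt = _
    rw [← h3]
    rfl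
  · rw [if_neg hI, if_neg hI]
    rfl

/-- The characteristic of a local differential operator vanishes if and only if the operator is a
sum of total derivatives of local differential operators. -/
theorem chiZero_iff {A : Op N n} {B : W N n} (hB : B ∈ Vs 0) (h : Rel A B) :
    ChiZero A ↔ ∃ b : Fin N → W N n, (∀ l, b l ∈ Vs 0) ∧ B = ∑ l, XO l (b l) := by
  constructor
  · rintro ⟨q, hq, hp, hz⟩
    obtain ⟨c, hc, rfl⟩ := exists_coe hq
    have hBc : B = real c := h.eq ((presents_iff hc).1 hp)
    obtain ⟨h1, -, b, hb, e⟩ := ibp hc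
    refine ⟨b, hb, ?_⟩
    have h0 : real (chiL c) = 0 := funext fun f => Subtype.ext (funext fun pt => by
      rw [coe_real h1, ← coe_chiL hc, hz _ (lf_local f)]
      rfl)
    rw [hBc, e, h0, add_zero]
  · rintro ⟨b, hb, e⟩
    obtain ⟨c, hc, -, rfl⟩ := hB
    refine ⟨_, good_coe hc, (presents_iff hc).2 h, fun g hg pt => ?_⟩
    obtain ⟨f, rfl⟩ := exists_lf hg
    obtain ⟨h1, h2, b', hb', e'⟩ := ibp hc
    have h0 : real (chiL c) = 0 := by
      refine sum_XO_eq_zero Finset.univ (fun l => b l - b' l) _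
        (fun l => sub_mem (hb l) (hb' l)) ?_ h2
      simp only [map_sub, Finset.sum_sub_distrib]
      rw [← e, sub_eq_iff_eq_add', ← e']
    rw [coe_chiL hc, ← coe_real h1, h0]
    rfl

/-- The equation `d_H f_1 = f_0 d_H` exhibits `f_0 ∘ d/dx^i_j` as a sum of total derivatives. -/
theorem ZO_of_cycle {f : WMat N n} (hf : ∀ εs δ, f εs δ ∈ Vs 0)
    (hd : ∀ εs, dK (f εs) = RK f εs) (j : Fin n) (i : Fin N) :
    ∃ b : Fin N → W N n, (∀ l, b l ∈ Vs 0) ∧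
      ZO j i (f (fun _ _ => true) fun _ => true) = ∑ l, XO l (b l) := by
  let tp : MD N n := fun _ _ => true
  let ε₀ : MD N n := Function.update tp j (Function.update (tp j) i false)
  have hr : raise (j, i) ε₀ = tp := by
    simp [raise, ε₀, tp]
  have hf0 : ∀ p : Fin n × Fin N, ε₀ p.1 p.2 = false ↔ p = (j, i) := by
    rintro ⟨k, l⟩
    by_cases hk : k = j
    · subst hk
      by_cases hl : l = i
      · subst hl; simp [ε₀]
      · simp [ε₀, tp, hl]
    · simp [ε₀, tp, hk]
  have hR : RK f ε₀ (fun _ => true) =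
      (-1 : ℝ) ^ sE (j, i) ε₀ • ZO j i (f tp fun _ => true) := by
    unfold RK
    rw [Finset.sum_eq_single (j, i), if_pos ((hf0 _).2 rfl), hr]
    · exact fun p _ hp => if_neg fun h => hp ((hf0 p).1 h)
    · simp
  refine ⟨fun l => (-1 : ℝ) ^ sE (j, i) ε₀ • (-1 : ℝ) ^ pos l (fun _ => true) •
    f ε₀ (Function.update (fun _ => true) l false), fun l =>
    Submodule.smul_mem _ _ (Submodule.smul_mem _ _ (hf _ _)), ?_⟩
  have h1 := congrFun (hd ε₀) fun _ => true
  rw [hR] at h1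
  have h2 := congrArg (fun x => (-1 : ℝ) ^ sE (j, i) ε₀ • x) h1
  have h3 := neg_one_pow_smul_smul (M := W N n) (sE (j, i) ε₀) (ZO j i (f tp fun _ => true))
  refine h3.symm.trans (h2.symm.trans ?_)
  simp only [dK, if_true, Finset.smul_sum, map_smul]

end

/-! ### Lifting -/

/-- An `n`-multilinear local differential operator
`A : [(Ω_*)^{⊗n}]_0 → Ω_0` lifts to a `0`-cycle `f = {f_s}` of `DEnd_*(n)` with `f_0 = A`
if and only if `χ(A ∘ d/dx^i_j) = 0` for all `1 ≤ i ≤ N`, `1 ≤ j ≤ n`; moreover if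
`χ(A) = 0` the lift can be chosen with `f_s = 0` for all `s ≥ 2`. -/
theorem lifting_DEnd {N n : ℕ} [NeZero n] (A : Op N n) (hA : IsPLDO A) :
    ((∃ F : DMat N n, LDOMat F ∧ GradedMat 0 F ∧ MatZeroLoc (deltaMat 0 F) ∧
        ∀ g, LocalTuple g → ∀ pt, B0 F g pt = A g pt) ↔
      (∀ (i : Fin N) (j : Fin n), ChiZero (precompD A i j))) ∧
    (ChiZero A →
      ∃ F : DMat N n, LDOMat F ∧ GradedMat 0 F ∧ MatZeroLoc (deltaMat 0 F) ∧
        (∀ g, LocalTuple g → ∀ pt, B0 F g pt = A g pt) ∧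
        ∀ εs δ, (∑ j, wt (εs j)) + 2 ≤ n * N →
          ∀ g, LocalTuple g → ∀ pt, F εs δ g pt = 0) := by
  obtain ⟨A', hA', hrel⟩ := pldo_exists hA
  have hZ : ∀ i j, ChiZero (precompD A i j) ↔
      ∃ b : Fin N → W N n, (∀ l, b l ∈ Vs 0) ∧ ZO j i A' = ∑ l, XO l (b l) := fun i j =>
    chiZero_iff (ZO_mem j i hA') (hrel.precompD i j)
  have htop : ∀ f : WMat N n, (f (fun _ _ => true) fun _ => true) = A' →
      ∀ g, LocalTuple g → ∀ pt, B0 (fun εs δ => toOp (f εs δ)) g pt = A g pt := by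
    intro f hf g hg pt
    obtain ⟨g, rfl⟩ := exists_lf hg
    rw [hrel g, ← hf]
    exact congrFun (toOp_rel _ g) pt
  refine ⟨⟨?_, fun H => ?_⟩, fun hχ => ?_⟩
  · rintro ⟨F, hF, -, hz, hF0⟩ i j
    choose f hf hr using fun εs δ => pldo_exists (hF εs δ)
    have hd := (delta_zero_iff hr).1 hz
    have e : (f (fun _ _ => true) fun _ => true) = A' :=
      Rel.eq (hr _ _) fun g => (funext fun pt => hF0 _ (lf_local g) pt).trans (hrel g)
    rw [hZ, ← e]
    exact ZO_of_cycle hf hd j i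
  · obtain ⟨f, hf, hf0, hd⟩ := lift_exists A' hA' fun j i => (hZ i j).1 (H i j)
    exact ⟨fun εs δ => toOp (f εs δ), fun εs δ => toOp_pldo (hf.mem εs δ), graded_toOp hf.gr,
      (delta_zero_iff fun εs δ => toOp_rel _).2 hd, htop f hf0⟩
  · obtain ⟨b, hb, e⟩ := (chiZero_iff hA' hrel).1 hχ
    obtain ⟨f, hf, hf0, hd, hs⟩ := lift_short A' b hb e
    refine ⟨fun εs δ => toOp (f εs δ), fun εs δ => toOp_pldo (hf.mem εs δ), graded_toOp hf.gr,
      (delta_zero_iff fun εs δ => toOp_rel _).2 hd, htop f hf0, fun εs δ h g hg pt => ?_⟩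
    obtain ⟨g, rfl⟩ := exists_lf hg
    beta_reduce
    rw [toOp_rel _ g, hs εs h]
    rfl

end JetBundle
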